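/- Let α ∈ (0,π) and, for i = 1, 2, let w_i, L_i ∈ (0,∞) and let u_i : P(α, w_i, L_i) → ℝ be a translator having boundary value −∞ at every point of the horizontal sides of its parallelogram and boundary value +∞ at every point of the nonhorizontal sides. If w₁ ≤ w₂ and L₁ ≥ L₂, then w₁ = w₂, L₁ = L₂, and u₁ − u₂ is constant. -/

import Mathlib

/-!
Write `Wᵢ = √(1 + |Duᵢ|²)` and `Xᵢ = Duᵢ / Wᵢ`. The translator equation is `div Xᵢ = 1 / Wᵢ`, so the
field `e^{u₁} (X₁ - X₂)` has divergence `e^{u₁} D` with `D = W₁ - (1 + ⟨Du₁, Du₂⟩) / W₂`. By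
Cauchy–Schwarz `D ≥ 0`, with equality only where `Du₁ = Du₂`. The argument takes place on the
parallelogram `Ω = P(α, w₁, L₂)`, which lies in both domains, and shows that `D` vanishes there.

The field is multiplied by `η(s u₂)`, where `η` decreases from `1` to `0` on `[1, 2]`, and its
divergence is integrated over `Ω ∩ {δ ≤ y ≤ w₁ - δ}`. Nothing flows through the nonhorizontal sides,
because `u₂ → +∞` there, and the flux through the horizontal segments is at most twice the integral
of `e^{u₁}` over them. The derivative of `η(s u₂)` enters through `⟨Du₂, X₁ - X₂⟩ ≤ 1`, which has a
favourable sign up to an error `s C e^{u₁}`. Both errors vanish as `s = δ → 0`, provided that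
`e^{u₁}` is integrable on `Ω` and its integrals over horizontal segments tend to zero at the
horizontal sides.

That integrability is a growth estimate: near a nonhorizontal side `u₁ ≤ K - β log P` for some
`β < 1`, where `P` is the distance to the side. It follows from the maximum principle, with the
strict supersolution `-β log P - (k/2) S²` for `S` a coordinate along the side. Since `P ^ (-β)` is
integrable, dominated convergence and the boundary value `-∞` give the claims.

Hence `u₁ - u₂` is constant on `Ω`. If `w₁ < w₂` or `L₂ < L₁`, one of the functions would be
infinite at a boundary point of `Ω` where the other one is finite.
-/

open Real Filter MeasureTheory Set

noncomputable section

/-- Partial derivative with respect to the first variable. -/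
def pdx (u : ℝ × ℝ → ℝ) (p : ℝ × ℝ) : ℝ := fderiv ℝ u p (1, 0)

/-- Partial derivative with respect to the second variable. -/
def pdy (u : ℝ × ℝ → ℝ) (p : ℝ × ℝ) : ℝ := fderiv ℝ u p (0, 1)

/-- `u` is a smooth solution of the translator equation
`(1 + u_y²)u_xx − 2u_x u_y u_xy + (1 + u_x²)u_yy = 1 + u_x² + u_y²` on `Ω`. -/
def IsTranslatorOn (Ω : Set (ℝ × ℝ)) (u : ℝ × ℝ → ℝ) : Prop :=
  ContDiffOn ℝ (⊤ : ℕ∞) u Ω ∧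
  ∀ p ∈ Ω,
    (1 + (pdy u p) ^ 2) * pdx (pdx u) p
      - 2 * pdx u p * pdy u p * pdy (pdx u) p
      + (1 + (pdx u p) ^ 2) * pdy (pdy u) p
    = 1 + (pdx u p) ^ 2 + (pdy u p) ^ 2

/-- The open parallelogram `P(α, w, L)`. -/
def Pgram (α w L : ℝ) : Set (ℝ × ℝ) :=
  {p | 0 < p.2 ∧ p.2 < w ∧
       p.2 * Real.cos α / Real.sin α < p.1 ∧
       p.1 < L + p.2 * Real.cos α / Real.sin α}

/-- `u` is a translator on `P(α,w,L)` with boundary value `−∞` at every point of the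
horizontal sides and `+∞` at every point of the nonhorizontal sides. -/
def ScherkBVP (α w L : ℝ) (u : ℝ × ℝ → ℝ) : Prop :=
  IsTranslatorOn (Pgram α w L) u ∧
  (∀ x : ℝ, 0 < x → x < L →
      Tendsto u (nhdsWithin (x, 0) (Pgram α w L)) atBot) ∧
  (∀ x : ℝ, w * Real.cos α / Real.sin α < x → x < L + w * Real.cos α / Real.sin α →
      Tendsto u (nhdsWithin (x, w) (Pgram α w L)) atBot) ∧
  (∀ y : ℝ, 0 < y → y < w →
      Tendsto u (nhdsWithin (y * Real.cos α / Real.sin α, y) (Pgram α w L)) atTop) ∧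
  (∀ y : ℝ, 0 < y → y < w →
      Tendsto u (nhdsWithin (L + y * Real.cos α / Real.sin α, y) (Pgram α w L)) atTop)

/-- The region `Ω(α, w)`: a "parallelogram" whose right-hand side is at infinity. -/
def OmegaReg (α w : ℝ) : Set (ℝ × ℝ) :=
  {p | 0 < p.2 ∧ p.2 < w ∧ p.2 * Real.cos α / Real.sin α < p.1}

/-- `u` is a translator on `Ω(α,w)` with boundary value `−∞` at every point of the two
horizontal edges and `+∞` at every point of the nonhorizontal edge. -/
def ScherkenoidBVP (α w : ℝ) (u : ℝ × ℝ → ℝ) : Prop :=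
  IsTranslatorOn (OmegaReg α w) u ∧
  (∀ x : ℝ, 0 < x → Tendsto u (nhdsWithin (x, 0) (OmegaReg α w)) atBot) ∧
  (∀ x : ℝ, w * Real.cos α / Real.sin α < x →
      Tendsto u (nhdsWithin (x, w) (OmegaReg α w)) atBot) ∧
  (∀ y : ℝ, 0 < y → y < w →
      Tendsto u (nhdsWithin (y * Real.cos α / Real.sin α, y) (OmegaReg α w)) atTop)

/-- The full strip `ℝ × (0, w)`. -/
def TStrip (w : ℝ) : Set (ℝ × ℝ) := {p | 0 < p.2 ∧ p.2 < w}

/-- The half strip `(0,∞) × (0, w)`. -/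
def THalfStrip (w : ℝ) : Set (ℝ × ℝ) := {p | 0 < p.1 ∧ 0 < p.2 ∧ p.2 < w}

/-- A pitchfork function of width `w`: a translator on `ℝ × (0,w)` with boundary value
`+∞` at `(x,0)` for `x < 0`, `−∞` at `(x,0)` for `x > 0`, and `−∞` at `(x,w)` for all `x`. -/
def IsPitchfork (w : ℝ) (u : ℝ × ℝ → ℝ) : Prop :=
  IsTranslatorOn (TStrip w) u ∧
  (∀ x : ℝ, x < 0 → Tendsto u (nhdsWithin (x, 0) (TStrip w)) atTop) ∧
  (∀ x : ℝ, 0 < x → Tendsto u (nhdsWithin (x, 0) (TStrip w)) atBot) ∧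
  (∀ x : ℝ, Tendsto u (nhdsWithin (x, w) (TStrip w)) atBot)

/-- The downward-tilted grim reaper `g_w` of width `w ≥ π`, normalized by `g_w(0,w/2) = 0`. -/
def grimTilt (w : ℝ) (p : ℝ × ℝ) : ℝ :=
  (w / π) ^ 2 * Real.log (Real.sin (π * p.2 / w)) - p.1 * Real.sqrt ((w / π) ^ 2 - 1)

section NormedSpace

variable {E : Type*} [NormedAddCommGroup E]

/-- The area element `√(1 + ‖p‖²)` of a graph whose gradient is `p`. -/
def areaElement (p : E) : ℝ := √(1 + ‖p‖ ^ 2)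

lemma areaElement_sq (p : E) : areaElement p ^ 2 = 1 + ‖p‖ ^ 2 := sq_sqrt (by positivity)

lemma areaElement_pos (p : E) : 0 < areaElement p := sqrt_pos.2 (by positivity)

lemma norm_lt_areaElement (p : E) : ‖p‖ < areaElement p :=
  lt_sqrt_of_sq_lt (by linarith)

/-- The horizontal part `p / √(1 + ‖p‖²)`, up to sign, of the unit normal of a graph whose
gradient is `p`. -/
def normalizedSlope [NormedSpace ℝ E] (p : E) : E := (areaElement p)⁻¹ • p

lemma norm_normalizedSlope_le_one [NormedSpace ℝ E] (p : E) : ‖normalizedSlope p‖ ≤ 1 := by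
  rw [normalizedSlope, norm_smul, norm_inv, norm_of_nonneg (areaElement_pos p).le]
  exact inv_mul_le_one_of_le₀ (norm_lt_areaElement p).le (areaElement_pos p).le

end NormedSpace

section InnerProductSpace

open scoped RealInnerProductSpace

variable {E : Type*} [NormedAddCommGroup E] [InnerProductSpace ℝ E] (p q : E)

/-- The area element of `p` minus its tangent-plane approximation at `q`: the gap in Cauchy–Schwarz
for `(1, p)` and `(1, q)`, divided by `areaElement q`. -/
def slopeExcess : ℝ := areaElement p - (1 + ⟪p, q⟫) / areaElement q

lemma inner_normalizedSlope_self : ⟪p, normalizedSlope p⟫ = areaElement p - (areaElement p)⁻¹ := by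
  have hp := (areaElement_pos p).ne'
  rw [normalizedSlope, real_inner_smul_right, real_inner_self_eq_norm_sq]
  field_simp
  linear_combination -areaElement_sq p

lemma inner_normalizedSlope_sub_le_one : ⟪q, normalizedSlope p - normalizedSlope q⟫ ≤ 1 := by
  have hp : ⟪q, normalizedSlope p⟫ ≤ ‖q‖ :=
    (real_inner_le_norm _ _).trans
      (mul_le_of_le_one_right (norm_nonneg q) (norm_normalizedSlope_le_one p))
  have hq : (areaElement q)⁻¹ ≤ 1 := by
    refine inv_le_one_of_one_le₀ (one_le_sqrt.2 ?_)
    linarith [sq_nonneg ‖q‖]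
  rw [inner_sub_right, inner_normalizedSlope_self]
  linarith [norm_lt_areaElement q]

lemma slopeExcess_eq_inner_add : slopeExcess p q =
    ⟪p, normalizedSlope p - normalizedSlope q⟫ + ((areaElement p)⁻¹ - (areaElement q)⁻¹) := by
  rw [inner_sub_right, inner_normalizedSlope_self, normalizedSlope, real_inner_smul_right,
    slopeExcess]
  ring

lemma areaElement_sq_mul_sq_sub : (areaElement p * areaElement q) ^ 2 - (1 + ⟪p, q⟫) ^ 2 =
    ‖p - q‖ ^ 2 + ((‖p‖ * ‖q‖) ^ 2 - ⟪p, q⟫ ^ 2) := by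
  rw [mul_pow, areaElement_sq, areaElement_sq, norm_sub_sq_real]
  ring

lemma inner_sq_le_norm_mul_norm_sq : ⟪p, q⟫ ^ 2 ≤ (‖p‖ * ‖q‖) ^ 2 :=
  sq_le_sq.2 ((abs_real_inner_le_norm p q).trans (le_abs_self _))

lemma slopeExcess_nonneg : 0 ≤ slopeExcess p q := by
  have hle : (1 + ⟪p, q⟫) ^ 2 ≤ (areaElement p * areaElement q) ^ 2 := by
    linarith [areaElement_sq_mul_sq_sub p q, inner_sq_le_norm_mul_norm_sq p q, sq_nonneg ‖p - q‖]
  rw [slopeExcess, sub_nonneg, div_le_iff₀ (areaElement_pos q)]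
  exact le_of_sq_le_sq hle (mul_pos (areaElement_pos p) (areaElement_pos q)).le

variable {p q} in
lemma slopeExcess_eq_zero_iff : slopeExcess p q = 0 ↔ p = q := by
  have hq := (areaElement_pos q).ne'
  constructor
  · intro h
    have heq : areaElement p * areaElement q = 1 + ⟪p, q⟫ := by
      rwa [slopeExcess, sub_eq_zero, eq_div_iff hq] at h
    have hsq := areaElement_sq_mul_sq_sub p q
    rw [heq, sub_self] at hsq
    have hnorm : ‖p - q‖ ^ 2 = 0 :=
      le_antisymm (by linarith [inner_sq_le_norm_mul_norm_sq p q]) (sq_nonneg _)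
    exact sub_eq_zero.1 (norm_eq_zero.1 (pow_eq_zero_iff two_ne_zero |>.1 hnorm))
  · rintro rfl
    rw [slopeExcess, real_inner_self_eq_norm_sq, ← areaElement_sq, sub_eq_zero, eq_div_iff hq, sq]

end InnerProductSpace

section NormalizedSlope

open scoped RealInnerProductSpace

variable {E : Type*} [NormedAddCommGroup E] [InnerProductSpace ℝ E]

lemma contDiff_areaElement {n : WithTop ℕ∞} : ContDiff ℝ n (areaElement : E → ℝ) :=
  (contDiff_const.add (contDiff_norm_sq ℝ)).sqrt fun p => by positivity

lemma contDiff_normalizedSlope {n : WithTop ℕ∞} : ContDiff ℝ n (normalizedSlope : E → E) :=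
  (contDiff_areaElement.inv fun p => (areaElement_pos p).ne').smul contDiff_id

lemma continuousOn_slopeExcess {X : Type*} [TopologicalSpace X] {s : Set X} {f g : X → E}
    (hf : ContinuousOn f s) (hg : ContinuousOn g s) :
    ContinuousOn (fun x => slopeExcess (f x) (g x)) s := by
  have hA : Continuous (areaElement : E → ℝ) := (contDiff_areaElement (n := 0)).continuous
  exact (hA.comp_continuousOn hf).sub ((continuousOn_const.add (hf.inner hg)).div
    (hA.comp_continuousOn hg) fun x _ => (areaElement_pos (g x)).ne')

lemma hasFDerivAt_areaElement (p : E) :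
    HasFDerivAt areaElement ((areaElement p)⁻¹ • innerSL ℝ p) p := by
  have hp : 1 + ‖p‖ ^ 2 ≠ 0 := by positivity
  refine (((hasStrictFDerivAt_norm_sq p).hasFDerivAt.const_add 1).sqrt hp).congr_fderiv ?_
  change (1 / (2 * areaElement p)) • (2 : ℕ) • innerSL ℝ p = _
  rw [← Nat.cast_smul_eq_nsmul ℝ, smul_smul]
  congr 1
  field [(areaElement_pos p).ne']

lemma fderiv_normalizedSlope_apply (p v : E) : fderiv ℝ normalizedSlope p v =
    (areaElement p)⁻¹ • v - (⟪p, v⟫ / areaElement p ^ 3) • p := by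
  have hp := (areaElement_pos p).ne'
  have hinv : HasFDerivAt (fun z : E => (areaElement z)⁻¹) _ p :=
    (hasDerivAt_inv hp).comp_hasFDerivAt p (hasFDerivAt_areaElement p)
  have hsmul : HasFDerivAt normalizedSlope _ p := hinv.smul (hasFDerivAt_id p)
  rw [hsmul.fderiv]
  simp only [add_apply, smul_apply, ContinuousLinearMap.smulRight_apply, innerSL_apply_apply,
    ContinuousLinearMap.id_apply, smul_eq_mul, sub_eq_add_neg, ← neg_smul]
  congr 2
  field

end NormalizedSlope

section PlaneCalculus

open scoped RealInnerProductSpace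

variable {u f : ℝ × ℝ → ℝ} {V₁ V₂ V : ℝ × ℝ → EuclideanSpace ℝ (Fin 2)} {q : ℝ × ℝ}

/-- The gradient of `u`, valued in the Euclidean plane so that its norm is the Euclidean one
(`ℝ × ℝ` carries the sup norm). -/
def grad (u : ℝ × ℝ → ℝ) (q : ℝ × ℝ) : EuclideanSpace ℝ (Fin 2) := !₂[pdx u q, pdy u q]

/-- The divergence of a planar vector field. -/
def divergence (V : ℝ × ℝ → EuclideanSpace ℝ (Fin 2)) (q : ℝ × ℝ) : ℝ :=
  fderiv ℝ V q (1, 0) 0 + fderiv ℝ V q (0, 1) 1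

/-- The translator equation is `translatorOp u q = 0`. -/
def translatorOp (u : ℝ × ℝ → ℝ) (q : ℝ × ℝ) : ℝ :=
  (1 + pdy u q ^ 2) * pdx (pdx u) q - 2 * pdx u q * pdy u q * pdy (pdx u) q
    + (1 + pdx u q ^ 2) * pdy (pdy u) q - (1 + pdx u q ^ 2 + pdy u q ^ 2)

lemma fderiv_apply_pair (a b : ℝ) : fderiv ℝ u q (a, b) = a * pdx u q + b * pdy u q := by
  have h : ((a, b) : ℝ × ℝ) = a • (1, 0) + b • (0, 1) := by simp
  rw [h, map_add, map_smul, map_smul]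
  rfl

lemma inner_grad (v : EuclideanSpace ℝ (Fin 2)) : ⟪grad u q, v⟫ = fderiv ℝ u q (v 0, v 1) := by
  simp [grad, fderiv_apply_pair, PiLp.inner_apply, mul_comm]

lemma norm_grad_sq : ‖grad u q‖ ^ 2 = pdx u q ^ 2 + pdy u q ^ 2 := by
  simp [grad, EuclideanSpace.norm_sq_eq]

lemma fderiv_eq_of_grad_eq {v : ℝ × ℝ → ℝ} (h : grad u q = grad v q) :
    fderiv ℝ u q = fderiv ℝ v q := by
  have hx : pdx u q = pdx v q := congr($h 0)
  have hy : pdy u q = pdy v q := congr($h 1)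
  ext
  · simpa [pdx] using hx
  · simpa [pdy] using hy

lemma divergence_sub (h₁ : DifferentiableAt ℝ V₁ q) (h₂ : DifferentiableAt ℝ V₂ q) :
    divergence (fun z => V₁ z - V₂ z) q = divergence V₁ q - divergence V₂ q := by
  simp only [divergence, fderiv_fun_sub h₁ h₂, sub_apply, PiLp.sub_apply]
  ring

lemma divergence_smul (hf : DifferentiableAt ℝ f q) (hV : DifferentiableAt ℝ V q) :
    divergence (fun z => f z • V z) q = ⟪grad f q, V q⟫ + f q * divergence V q := by
  simp only [divergence, fderiv_fun_smul hf hV, inner_grad, fderiv_apply_pair (V q 0), pdx, pdy,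
    add_apply, smul_apply, ContinuousLinearMap.smulRight_apply,
    PiLp.add_apply, PiLp.smul_apply, smul_eq_mul]
  ring

lemma fderiv_fderiv_apply (hu : ContDiffAt ℝ 2 u q) (v w : ℝ × ℝ) :
    fderiv ℝ (fun z => fderiv ℝ u z v) q w = fderiv ℝ (fderiv ℝ u) q w v := by
  rw [fderiv_clm_apply ((hu.fderiv_right (m := 1) (by norm_num)).differentiableAt one_ne_zero)
    (differentiableAt_const v)]
  simp

lemma pdx_pdy_comm (hu : ContDiffAt ℝ 2 u q) : pdx (pdy u) q = pdy (pdx u) q := by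
  have hsymm : IsSymmSndFDerivAt ℝ u q := hu.isSymmSndFDerivAt (by simp)
  calc pdx (pdy u) q = fderiv ℝ (fderiv ℝ u) q (1, 0) (0, 1) := fderiv_fderiv_apply hu _ _
    _ = fderiv ℝ (fderiv ℝ u) q (0, 1) (1, 0) := hsymm.eq _ _
    _ = pdy (pdx u) q := (fderiv_fderiv_apply hu _ _).symm

lemma contDiffAt_grad (hu : ContDiffAt ℝ 2 u q) : ContDiffAt ℝ 1 (grad u) q := by
  have h (v : ℝ × ℝ) : ContDiffAt ℝ 1 (fun z => fderiv ℝ u z v) q :=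
    (hu.fderiv_right (by norm_num)).clm_apply contDiffAt_const
  refine contDiffAt_euclidean.2 fun i => ?_
  fin_cases i
  exacts [h (1, 0), h (0, 1)]

lemma fderiv_grad_apply (hu : ContDiffAt ℝ 2 u q) (v : ℝ × ℝ) :
    fderiv ℝ (grad u) q v = !₂[fderiv ℝ (pdx u) q v, fderiv ℝ (pdy u) q v] := by
  have hd := ((contDiffAt_grad hu).differentiableAt one_ne_zero).hasFDerivAt
  ext i
  fin_cases i
  · exact congr($(((EuclideanSpace.proj 0).hasFDerivAt.comp q hd).fderiv) v).symm
  · exact congr($(((EuclideanSpace.proj 1).hasFDerivAt.comp q hd).fderiv) v).symm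

lemma contDiffAt_normalizedSlope_grad (hu : ContDiffAt ℝ 2 u q) :
    ContDiffAt ℝ 1 (fun z => normalizedSlope (grad u z)) q :=
  contDiff_normalizedSlope.contDiffAt.comp q (contDiffAt_grad hu)

lemma divergence_normalizedSlope_grad (hu : ContDiffAt ℝ 2 u q) :
    divergence (fun z => normalizedSlope (grad u z)) q =
      translatorOp u q / areaElement (grad u q) ^ 3 + (areaElement (grad u q))⁻¹ := by
  have hW := (areaElement_pos (grad u q)).ne'
  have hW2 := areaElement_sq (grad u q)
  have hfderiv (v : ℝ × ℝ) : fderiv ℝ (fun z => normalizedSlope (grad u z)) q v =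
      fderiv ℝ normalizedSlope (grad u q) (fderiv ℝ (grad u) q v) := by
    rw [fderiv_fun_comp q (contDiff_normalizedSlope.differentiable one_ne_zero _)
      ((contDiffAt_grad hu).differentiableAt one_ne_zero)]
    rfl
  have hxx : fderiv ℝ (pdx u) q (1, 0) = pdx (pdx u) q := rfl
  have hxy : fderiv ℝ (pdx u) q (0, 1) = pdy (pdx u) q := rfl
  have hyx : fderiv ℝ (pdy u) q (1, 0) = pdy (pdx u) q := pdx_pdy_comm hu
  have hyy : fderiv ℝ (pdy u) q (0, 1) = pdy (pdy u) q := rfl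
  have hgx : grad u q 0 = pdx u q := rfl
  have hgy : grad u q 1 = pdy u q := rfl
  simp only [divergence, hfderiv, fderiv_normalizedSlope_apply, fderiv_grad_apply hu, inner_grad,
    fderiv_apply_pair, hxx, hxy, hyx, hyy, PiLp.sub_apply, PiLp.smul_apply, smul_eq_mul,
    Matrix.cons_val_zero, Matrix.cons_val_one, hgx, hgy, translatorOp]
  rw [norm_grad_sq] at hW2
  field_simp
  linear_combination (pdx (pdx u) q + pdy (pdy u) q - 1) * hW2

end PlaneCalculus

lemma deriv_smoothTransition_nonneg (t : ℝ) : 0 ≤ deriv smoothTransition t :=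
  smoothTransition.monotone.deriv_nonneg

lemma exists_deriv_smoothTransition_le : ∃ C, ∀ t, deriv smoothTransition t ≤ C := by
  have hcont : Continuous (deriv smoothTransition) :=
    (smoothTransition.contDiff (n := 1)).continuous_deriv le_rfl
  have hzero : ∀ t ∉ Icc (0 : ℝ) 1, deriv smoothTransition t = 0 := by
    intro t ht
    rw [mem_Icc, not_and_or, not_le, not_le] at ht
    rcases ht with ht | ht
    · refine IsLocalMin.deriv_eq_zero (.of_forall fun x => ?_)
      rw [smoothTransition.zero_of_nonpos ht.le]
      exact smoothTransition.nonneg x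
    · refine IsLocalMax.deriv_eq_zero (.of_forall fun x => ?_)
      rw [smoothTransition.one_of_one_le ht.le]
      exact smoothTransition.le_one x
  obtain ⟨C, hC⟩ := hcont.bounded_above_of_compact_support (.intro isCompact_Icc hzero)
  exact ⟨C, fun t => (le_abs_self _).trans (hC t)⟩

section Flux

open scoped RealInnerProductSpace

variable {u f u₁ u₂ : ℝ × ℝ → ℝ} {q : ℝ × ℝ}

/-- `C²` subsolutions of the translator equation. -/
def IsSubtranslatorOn (Ω : Set (ℝ × ℝ)) (u : ℝ × ℝ → ℝ) : Prop :=
  ContDiffOn ℝ 2 u Ω ∧ ∀ q ∈ Ω, 0 ≤ translatorOp u q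

/-- `C²` supersolutions of the translator equation. -/
def IsSupertranslatorOn (Ω : Set (ℝ × ℝ)) (u : ℝ × ℝ → ℝ) : Prop :=
  ContDiffOn ℝ 2 u Ω ∧ ∀ q ∈ Ω, translatorOp u q ≤ 0

/-- The field `exp u₁ (N₁ - N₂)`, where `Nᵢ` is the normalized gradient of `uᵢ`. -/
def expFlux (u₁ u₂ : ℝ × ℝ → ℝ) (q : ℝ × ℝ) : EuclideanSpace ℝ (Fin 2) :=
  exp (u₁ q) • (normalizedSlope (grad u₁ q) - normalizedSlope (grad u₂ q))

/-- A cutoff equal to `1` where `s * u ≤ 1` and to `0` where `2 ≤ s * u`. -/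
def heightCutoff (s : ℝ) (u : ℝ × ℝ → ℝ) (q : ℝ × ℝ) : ℝ := smoothTransition (2 - s * u q)

lemma inner_grad_comp {φ : ℝ → ℝ} {φ' : ℝ} (hφ : HasDerivAt φ φ' (f q))
    (hf : DifferentiableAt ℝ f q) (v : EuclideanSpace ℝ (Fin 2)) :
    ⟪grad (fun z => φ (f z)) q, v⟫ = φ' * ⟪grad f q, v⟫ := by
  have hcomp : HasFDerivAt (fun z => φ (f z)) (φ' • fderiv ℝ f q) q :=
    hφ.comp_hasFDerivAt q hf.hasFDerivAt
  rw [inner_grad, inner_grad, hcomp.fderiv, smul_apply, smul_eq_mul]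

lemma norm_expFlux_le : ‖expFlux u₁ u₂ q‖ ≤ 2 * exp (u₁ q) := by
  rw [expFlux, norm_smul, norm_of_nonneg (exp_pos _).le, mul_comm]
  gcongr
  refine (norm_sub_le _ _).trans ?_
  linarith [norm_normalizedSlope_le_one (grad u₁ q), norm_normalizedSlope_le_one (grad u₂ q)]

lemma contDiffAt_expFlux (h₁ : ContDiffAt ℝ 2 u₁ q) (h₂ : ContDiffAt ℝ 2 u₂ q) :
    ContDiffAt ℝ 1 (expFlux u₁ u₂) q :=
  (h₁.of_le one_le_two).exp.smul
    ((contDiffAt_normalizedSlope_grad h₁).sub (contDiffAt_normalizedSlope_grad h₂))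

lemma exp_mul_slopeExcess_le_divergence_expFlux (h₁ : ContDiffAt ℝ 2 u₁ q)
    (h₂ : ContDiffAt ℝ 2 u₂ q) (hsub : 0 ≤ translatorOp u₁ q) (hsuper : translatorOp u₂ q ≤ 0) :
    exp (u₁ q) * slopeExcess (grad u₁ q) (grad u₂ q) ≤ divergence (expFlux u₁ u₂) q := by
  have hN₁ := (contDiffAt_normalizedSlope_grad h₁).differentiableAt one_ne_zero
  have hN₂ := (contDiffAt_normalizedSlope_grad h₂).differentiableAt one_ne_zero
  have hu₁ := h₁.differentiableAt two_ne_zero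
  have hdiv₁ : 0 ≤ translatorOp u₁ q / areaElement (grad u₁ q) ^ 3 :=
    div_nonneg hsub (pow_pos (areaElement_pos _) 3).le
  have hdiv₂ : translatorOp u₂ q / areaElement (grad u₂ q) ^ 3 ≤ 0 :=
    div_nonpos_of_nonpos_of_nonneg hsuper (pow_pos (areaElement_pos _) 3).le
  unfold expFlux
  rw [divergence_smul hu₁.exp (hN₁.fun_sub hN₂), inner_grad_comp (hasDerivAt_exp _) hu₁,
    divergence_sub hN₁ hN₂, divergence_normalizedSlope_grad h₁, divergence_normalizedSlope_grad h₂,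
    slopeExcess_eq_inner_add, ← mul_add]
  gcongr <;> linarith

lemma heightCutoff_nonneg {s : ℝ} : 0 ≤ heightCutoff s u q := smoothTransition.nonneg _

lemma heightCutoff_le_one {s : ℝ} : heightCutoff s u q ≤ 1 := smoothTransition.le_one _

lemma heightCutoff_eq_one {s : ℝ} (h : s * u q ≤ 1) : heightCutoff s u q = 1 :=
  smoothTransition.one_of_one_le (by linarith)

lemma heightCutoff_eq_zero {s : ℝ} (h : 2 ≤ s * u q) : heightCutoff s u q = 0 :=
  smoothTransition.zero_of_nonpos (by linarith)

lemma contDiffAt_heightCutoff {s : ℝ} {n : ℕ∞} (h : ContDiffAt ℝ n u q) :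
    ContDiffAt ℝ n (heightCutoff s u) q :=
  smoothTransition.contDiffAt.comp q (contDiffAt_const.sub (contDiffAt_const.mul h))

lemma le_divergence_heightCutoff_smul_expFlux {s C : ℝ} (hs : 0 ≤ s)
    (hC : ∀ t, deriv smoothTransition t ≤ C) (h₁ : ContDiffAt ℝ 2 u₁ q) (h₂ : ContDiffAt ℝ 2 u₂ q)
    (hsub : 0 ≤ translatorOp u₁ q) (hsuper : translatorOp u₂ q ≤ 0) :
    heightCutoff s u₂ q * (exp (u₁ q) * slopeExcess (grad u₁ q) (grad u₂ q))
        - s * C * exp (u₁ q) ≤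
      divergence (fun z => heightCutoff s u₂ z • expFlux u₁ u₂ z) q := by
  have hcut : ContDiffAt ℝ 1 (heightCutoff s u₂) q :=
    contDiffAt_heightCutoff (n := 1) (h₂.of_le one_le_two)
  have hderiv : HasDerivAt (fun t => smoothTransition (2 - s * t))
      (-(s * deriv smoothTransition (2 - s * u₂ q))) (u₂ q) := by
    have hS := (smoothTransition.contDiff (n := 1)).differentiable one_ne_zero (2 - s * u₂ q)
    have hlin : HasDerivAt (fun t => 2 - s * t) (-s) (u₂ q) :=
      (((hasDerivAt_id (u₂ q)).const_mul s).const_sub 2).congr_deriv (by rw [mul_one])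
    refine (hS.hasDerivAt.comp (u₂ q) hlin).congr_deriv ?_
    ring
  have hgrad : -(s * C * exp (u₁ q)) ≤ ⟪grad (heightCutoff s u₂) q, expFlux u₁ u₂ q⟫ := by
    unfold heightCutoff
    rw [inner_grad_comp hderiv (h₂.differentiableAt two_ne_zero), expFlux, real_inner_smul_right]
    have hS : 0 ≤ deriv smoothTransition (2 - s * u₂ q) := deriv_smoothTransition_nonneg _
    calc -(s * C * exp (u₁ q))
        ≤ -(s * deriv smoothTransition (2 - s * u₂ q) * exp (u₁ q) * 1) := by
          rw [mul_one]; gcongr; exact hC _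
      _ ≤ -(s * deriv smoothTransition (2 - s * u₂ q) * exp (u₁ q) *
            ⟪grad u₂ q, normalizedSlope (grad u₁ q) - normalizedSlope (grad u₂ q)⟫) := by
          gcongr; exact inner_normalizedSlope_sub_le_one _ _
      _ = _ := by ring
  rw [divergence_smul (hcut.differentiableAt one_ne_zero)
    ((contDiffAt_expFlux h₁ h₂).differentiableAt one_ne_zero)]
  have hdiv : heightCutoff s u₂ q * (exp (u₁ q) * slopeExcess (grad u₁ q) (grad u₂ q)) ≤
      heightCutoff s u₂ q * divergence (expFlux u₁ u₂) q := by
    gcongr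
    · exact heightCutoff_nonneg
    · exact exp_mul_slopeExcess_le_divergence_expFlux h₁ h₂ hsub hsuper
  linarith

end Flux

lemma continuousAt_divergence {V : ℝ × ℝ → EuclideanSpace ℝ (Fin 2)} {q : ℝ × ℝ}
    (hV : ContDiffAt ℝ 1 V q) : ContinuousAt (divergence V) q := by
  have hcont : ContinuousAt (fderiv ℝ V) q :=
    (hV.fderiv_right (m := 0) (by norm_num)).continuousAt
  unfold divergence
  fun_prop

theorem integral_divergence_of_contDiffAt {V : ℝ × ℝ → EuclideanSpace ℝ (Fin 2)} {a b : ℝ × ℝ}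
    (hab : a ≤ b) (hV : ∀ q ∈ Icc a b, ContDiffAt ℝ 1 V q) :
    ∫ q in Icc a b, divergence V q =
      (((∫ x in a.1..b.1, V (x, b.2) 1) - ∫ x in a.1..b.1, V (x, a.2) 1) +
        ∫ y in a.2..b.2, V (b.1, y) 0) - ∫ y in a.2..b.2, V (a.1, y) 0 := by
  have hsub : Ioo a.1 b.1 ×ˢ Ioo a.2 b.2 ⊆ Icc a b := by
    rw [Icc_prod_eq]
    exact prod_mono Ioo_subset_Icc_self Ioo_subset_Icc_self
  have hcont (i : Fin 2) : ContinuousOn (fun q => V q i) (Icc a b) := fun q hq =>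
    ((EuclideanSpace.proj (𝕜 := ℝ) i).continuous.continuousAt.comp
      (hV q hq).continuousAt).continuousWithinAt
  have hderiv (i : Fin 2) (q) (hq : q ∈ Ioo a.1 b.1 ×ˢ Ioo a.2 b.2) :
      HasFDerivAt (fun q => V q i) ((EuclideanSpace.proj (𝕜 := ℝ) i).comp (fderiv ℝ V q)) q :=
    (EuclideanSpace.proj (𝕜 := ℝ) i).hasFDerivAt.comp q
      ((hV q (hsub hq)).differentiableAt one_ne_zero).hasFDerivAt
  have hint : IntegrableOn (divergence V) (Icc a b) :=
    ContinuousOn.integrableOn_compact isCompact_Icc fun q hq =>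
      (continuousAt_divergence (hV q hq)).continuousWithinAt
  exact integral_divergence_prod_Icc_of_hasFDerivAt_of_le (fun q => V q 0) (fun q => V q 1) _ _ a b
    hab (hcont 0) (hcont 1) (hderiv 0) (hderiv 1) hint

lemma eventually_imp_of_frontier {X : Type*} [TopologicalSpace X] {D : Set X} {p : X → Prop}
    {x : X} (hD : IsOpen D) (hx : x ∉ D) (hp : x ∈ frontier D → ∀ᶠ y in nhdsWithin x D, p y) :
    ∀ᶠ y in nhds x, y ∈ D → p y := by
  rw [← eventually_nhdsWithin_iff]
  by_cases hcl : x ∈ closure D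
  · exact hp (hD.frontier_eq ▸ ⟨hcl, hx⟩)
  · rw [notMem_closure_iff_nhdsWithin_eq_bot.1 hcl]
    exact eventually_bot

section FluxEstimate

variable {Ω K : Set (ℝ × ℝ)} {u₁ u₂ : ℝ × ℝ → ℝ} {s C c d y : ℝ} {q : ℝ × ℝ}

/-- The flux comparing `u₁` with `u₂`, cut off where `u₂` is large and extended by zero from `Ω`. -/
def cutoffFlux (s : ℝ) (Ω : Set (ℝ × ℝ)) (u₁ u₂ : ℝ × ℝ → ℝ) :
    ℝ × ℝ → EuclideanSpace ℝ (Fin 2) :=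
  Ω.indicator fun z => heightCutoff s u₂ z • expFlux u₁ u₂ z

/-- The integral of `f` over the horizontal slice of `Ω` at height `y`. -/
def sliceIntegral (Ω : Set (ℝ × ℝ)) (f : ℝ × ℝ → ℝ) (y : ℝ) : ℝ := ∫ x, Ω.indicator f (x, y)

lemma cutoffFlux_eventuallyEq_of_mem (hΩ : IsOpen Ω) (hq : q ∈ Ω) :
    cutoffFlux s Ω u₁ u₂ =ᶠ[nhds q] fun z => heightCutoff s u₂ z • expFlux u₁ u₂ z := by
  filter_upwards [hΩ.mem_nhds hq] with z hz using indicator_of_mem hz _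

lemma cutoffFlux_eventuallyEq_zero (hΩ : IsOpen Ω) (hs : 0 < s) (hq : q ∉ Ω)
    (htop : q ∈ frontier Ω → Tendsto u₂ (nhdsWithin q Ω) atTop) :
    cutoffFlux s Ω u₁ u₂ =ᶠ[nhds q] 0 := by
  filter_upwards [eventually_imp_of_frontier hΩ hq
    fun hf => (htop hf).eventually_ge_atTop (2 / s)] with z hz
  by_cases hzΩ : z ∈ Ω
  · have hcut : heightCutoff s u₂ z = 0 :=
      heightCutoff_eq_zero (by linarith [(div_le_iff₀ hs).1 (hz hzΩ)])
    simp [cutoffFlux, hzΩ, hcut]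
  · simp [cutoffFlux, hzΩ]

lemma contDiffAt_cutoffFlux (hΩ : IsOpen Ω) (h₁ : ContDiffOn ℝ 2 u₁ Ω) (h₂ : ContDiffOn ℝ 2 u₂ Ω)
    (hs : 0 < s) (htop : q ∈ frontier Ω → Tendsto u₂ (nhdsWithin q Ω) atTop) :
    ContDiffAt ℝ 1 (cutoffFlux s Ω u₁ u₂) q := by
  by_cases hq : q ∈ Ω
  · have h₁q := h₁.contDiffAt (hΩ.mem_nhds hq)
    have h₂q := h₂.contDiffAt (hΩ.mem_nhds hq)
    exact ((contDiffAt_heightCutoff (n := 1) (h₂q.of_le one_le_two)).smul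
      (contDiffAt_expFlux h₁q h₂q)).congr_of_eventuallyEq (cutoffFlux_eventuallyEq_of_mem hΩ hq)
  · exact contDiffAt_const.congr_of_eventuallyEq (cutoffFlux_eventuallyEq_zero hΩ hs hq htop)

lemma norm_cutoffFlux_le : ‖cutoffFlux s Ω u₁ u₂ q‖ ≤ 2 * Ω.indicator (fun z => exp (u₁ z)) q := by
  by_cases hq : q ∈ Ω
  · rw [cutoffFlux, indicator_of_mem hq, indicator_of_mem hq, norm_smul,
      norm_of_nonneg heightCutoff_nonneg]
    exact (mul_le_of_le_one_left (norm_nonneg _) heightCutoff_le_one).trans norm_expFlux_le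
  · simp [cutoffFlux, hq]

lemma indicator_slopeExcess_le_divergence_cutoffFlux (hΩ : IsOpen Ω) (h₁ : IsSubtranslatorOn Ω u₁)
    (h₂ : IsSupertranslatorOn Ω u₂) (hs : 0 < s) (hC : ∀ t, deriv smoothTransition t ≤ C)
    (htop : q ∈ frontier Ω → Tendsto u₂ (nhdsWithin q Ω) atTop) (hK : K ⊆ Ω)
    (hKs : ∀ z ∈ K, s * u₂ z ≤ 1) :
    K.indicator (fun z => exp (u₁ z) * slopeExcess (grad u₁ z) (grad u₂ z)) q ≤
      divergence (cutoffFlux s Ω u₁ u₂) q + s * C * Ω.indicator (fun z => exp (u₁ z)) q := by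
  by_cases hq : q ∈ Ω
  · have hdiv := le_divergence_heightCutoff_smul_expFlux hs.le hC
      (h₁.1.contDiffAt (hΩ.mem_nhds hq)) (h₂.1.contDiffAt (hΩ.mem_nhds hq)) (h₁.2 q hq) (h₂.2 q hq)
    have hexcess : 0 ≤ exp (u₁ q) * slopeExcess (grad u₁ q) (grad u₂ q) :=
      mul_nonneg (exp_pos _).le (slopeExcess_nonneg _ _)
    have hcut : K.indicator (fun z => exp (u₁ z) * slopeExcess (grad u₁ z) (grad u₂ z)) q ≤
        heightCutoff s u₂ q * (exp (u₁ q) * slopeExcess (grad u₁ q) (grad u₂ q)) := by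
      by_cases hqK : q ∈ K
      · rw [indicator_of_mem hqK, heightCutoff_eq_one (hKs q hqK), one_mul]
      · rw [indicator_of_notMem hqK]
        exact mul_nonneg heightCutoff_nonneg hexcess
    rw [indicator_of_mem hq, divergence, (cutoffFlux_eventuallyEq_of_mem hΩ hq).fderiv_eq,
      ← divergence]
    linarith
  · have hzero : divergence (cutoffFlux s Ω u₁ u₂) q = 0 := by
      rw [divergence, (cutoffFlux_eventuallyEq_zero hΩ hs hq htop).fderiv_eq]
      simp
    rw [indicator_of_notMem (fun h => hq (hK h)), indicator_of_notMem hq, hzero]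
    simp

lemma abs_integral_cutoffFlux_le {a b : ℝ} (hab : a ≤ b) (i : Fin 2)
    (hint : Integrable fun x => Ω.indicator (fun z => exp (u₁ z)) (x, y)) :
    |∫ x in a..b, cutoffFlux s Ω u₁ u₂ (x, y) i| ≤
      2 * sliceIntegral Ω (fun z => exp (u₁ z)) y := by
  rw [intervalIntegral.integral_of_le hab, sliceIntegral, ← integral_const_mul]
  calc _ ≤ ∫ x in Ioc a b, 2 * Ω.indicator (fun z => exp (u₁ z)) (x, y) :=
        norm_integral_le_of_norm_le (hint.const_mul 2).integrableOn
          (.of_forall fun x => (PiLp.norm_apply_le _ i).trans norm_cutoffFlux_le)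
    _ ≤ _ := setIntegral_le_integral (hint.const_mul 2)
        (.of_forall fun x => mul_nonneg two_pos.le (indicator_nonneg (fun z _ => (exp_pos _).le) _))

lemma setIntegral_divergence_cutoffFlux_le {A : ℝ} (hA0 : 0 < A) (hA : ∀ z ∈ Ω, ‖z‖ < A)
    (hcd : c ≤ d) (hV : ∀ z ∈ Icc (-A, c) (A, d), ContDiffAt ℝ 1 (cutoffFlux s Ω u₁ u₂) z)
    (hintc : Integrable fun x => Ω.indicator (fun z => exp (u₁ z)) (x, c))
    (hintd : Integrable fun x => Ω.indicator (fun z => exp (u₁ z)) (x, d)) :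
    ∫ z in Icc (-A, c) (A, d), divergence (cutoffFlux s Ω u₁ u₂) z ≤
      2 * (sliceIntegral Ω (fun z => exp (u₁ z)) c + sliceIntegral Ω (fun z => exp (u₁ z)) d) := by
  have hAA : -A ≤ A := by linarith
  have hside (x y : ℝ) (hx : |x| = A) : cutoffFlux s Ω u₁ u₂ (x, y) = 0 :=
    indicator_of_notMem (fun h => ((norm_fst_le _).trans_lt (hA _ h)).ne hx) _
  rw [integral_divergence_of_contDiffAt (Prod.mk_le_mk.2 ⟨hAA, hcd⟩) hV]
  simp only [hside A _ (abs_of_pos hA0), hside (-A) _ (by rw [abs_neg, abs_of_pos hA0]),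
    PiLp.zero_apply, intervalIntegral.integral_zero, add_zero, sub_zero]
  linarith [(abs_le.1 (abs_integral_cutoffFlux_le (s := s) (u₂ := u₂) hAA 1 hintc)).1,
    (abs_le.1 (abs_integral_cutoffFlux_le (s := s) (u₂ := u₂) hAA 1 hintd)).2]

theorem setIntegral_slopeExcess_le (hΩ : IsOpen Ω) (hΩb : Bornology.IsBounded Ω)
    (h₁ : IsSubtranslatorOn Ω u₁) (h₂ : IsSupertranslatorOn Ω u₂) (hcd : c ≤ d)
    (htop : ∀ z ∈ frontier Ω, z.2 ∈ Icc c d → Tendsto u₂ (nhdsWithin z Ω) atTop)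
    (hint : IntegrableOn (fun z => exp (u₁ z)) Ω)
    (hintc : Integrable fun x => Ω.indicator (fun z => exp (u₁ z)) (x, c))
    (hintd : Integrable fun x => Ω.indicator (fun z => exp (u₁ z)) (x, d))
    (hs : 0 < s) (hC : ∀ t, deriv smoothTransition t ≤ C)
    (hKm : MeasurableSet K) (hK : K ⊆ Ω) (hKcd : ∀ z ∈ K, z.2 ∈ Icc c d)
    (hKs : ∀ z ∈ K, s * u₂ z ≤ 1) :
    ∫ z in K, exp (u₁ z) * slopeExcess (grad u₁ z) (grad u₂ z) ≤
      2 * (sliceIntegral Ω (fun z => exp (u₁ z)) c + sliceIntegral Ω (fun z => exp (u₁ z)) d)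
        + s * C * ∫ z in Ω, exp (u₁ z) := by
  obtain ⟨A, hA0, hA⟩ := hΩb.exists_pos_norm_lt
  set R := Icc (-A, c) (A, d)
  have htopR {q : ℝ × ℝ} (hq : q ∈ R) (hf : q ∈ frontier Ω) : Tendsto u₂ (nhdsWithin q Ω) atTop :=
    htop q hf ⟨hq.1.2, hq.2.2⟩
  have hKR : K ⊆ R := fun z hz =>
    have h := abs_lt.1 ((norm_fst_le z).trans_lt (hA z (hK hz)))
    ⟨⟨h.1.le, (hKcd z hz).1⟩, ⟨h.2.le, (hKcd z hz).2⟩⟩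
  have hV (q) (hq : q ∈ R) : ContDiffAt ℝ 1 (cutoffFlux s Ω u₁ u₂) q :=
    contDiffAt_cutoffFlux hΩ h₁.1 h₂.1 hs (htopR hq)
  have hintdiv : IntegrableOn (divergence (cutoffFlux s Ω u₁ u₂)) R :=
    ContinuousOn.integrableOn_compact isCompact_Icc fun q hq =>
      (continuousAt_divergence (hV q hq)).continuousWithinAt
  have hintexp := hint.integrable_indicator hΩ.measurableSet
  have hC0 : 0 ≤ C := (deriv_smoothTransition_nonneg 0).trans (hC 0)
  calc _ = ∫ z in R, K.indicator
          (fun z => exp (u₁ z) * slopeExcess (grad u₁ z) (grad u₂ z)) z := by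
        rw [setIntegral_indicator hKm, inter_eq_self_of_subset_right hKR]
    _ ≤ ∫ z in R, (divergence (cutoffFlux s Ω u₁ u₂) z
          + s * C * Ω.indicator (fun z => exp (u₁ z)) z) := by
        refine integral_mono_of_nonneg (.of_forall fun z => indicator_nonneg (fun z _ =>
          mul_nonneg (exp_pos _).le (slopeExcess_nonneg _ _)) z)
          (hintdiv.add (hintexp.integrableOn.const_mul _)) ?_
        filter_upwards [ae_restrict_mem measurableSet_Icc] with z hz using
          indicator_slopeExcess_le_divergence_cutoffFlux hΩ h₁ h₂ hs hC (htopR hz) hK hKs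
    _ = (∫ z in R, divergence (cutoffFlux s Ω u₁ u₂) z)
          + s * C * ∫ z in R, Ω.indicator (fun z => exp (u₁ z)) z := by
        rw [integral_add hintdiv (hintexp.integrableOn.const_mul _), integral_const_mul]
    _ ≤ _ := by
        gcongr
        · exact setIntegral_divergence_cutoffFlux_le hA0 hA hcd hV hintc hintd
        · rw [← integral_indicator hΩ.measurableSet]
          exact setIntegral_le_integral hintexp
            (.of_forall <| indicator_nonneg fun z _ => (exp_pos _).le)

end FluxEstimate

section Comparison

lemma deriv_deriv_nonpos_of_isLocalMax {g : ℝ → ℝ} {t : ℝ} (hg : ContinuousAt g t)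
    (hmax : IsLocalMax g t) : deriv (deriv g) t ≤ 0 := by
  by_contra! hpos
  have hmin : IsLocalMin g t := isLocalMin_of_deriv_deriv_pos hpos hmax.deriv_eq_zero hg
  have hconst : g =ᶠ[nhds t] fun _ => g t := by
    filter_upwards [hmin, hmax] with s hs₁ hs₂ using le_antisymm hs₂ hs₁
  have hzero : deriv (deriv g) t = 0 := by
    rw [hconst.deriv.deriv_eq, deriv_const', deriv_const]
  exact hpos.ne' hzero

lemma fderiv_fderiv_nonpos_of_isLocalMax {E : Type*} [NormedAddCommGroup E] [NormedSpace ℝ E]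
    {f : E → ℝ} {x : E} (hf : ContDiffAt ℝ 2 f x) (hmax : IsLocalMax f x) (v : E) :
    fderiv ℝ (fderiv ℝ f) x v v ≤ 0 := by
  let line (t : ℝ) : E := x + t • v
  have hline (t : ℝ) : HasDerivAt line v t :=
    (((hasDerivAt_id t).smul_const v).const_add x).congr_deriv (one_smul ℝ v)
  have hx : line 0 = x := by simp [line]
  have hcont : Tendsto line (nhds 0) (nhds x) := hx ▸ (hline 0).continuousAt.tendsto
  have hderiv : deriv (f ∘ line) =ᶠ[nhds 0] fun t => fderiv ℝ f (line t) v := by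
    filter_upwards [hcont.eventually (hf.eventually (by simp))] with t ht
    exact ((ht.differentiableAt two_ne_zero).hasFDerivAt.comp_hasDerivAt t (hline t)).deriv
  have hderiv2 : deriv (deriv (f ∘ line)) 0 = fderiv ℝ (fderiv ℝ f) x v v := by
    rw [hderiv.deriv_eq]
    have hd : DifferentiableAt ℝ (fderiv ℝ f) (line 0) :=
      hx.symm ▸ (hf.fderiv_right (m := 1) (by norm_num)).differentiableAt one_ne_zero
    have hcomp : HasDerivAt (fun t => fderiv ℝ f (line t) v) _ 0 :=
      (hd.hasFDerivAt.comp_hasDerivAt 0 (hline 0)).clm_apply (hasDerivAt_const 0 v)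
    simpa [hx] using hcomp.deriv
  rw [← hderiv2]
  exact deriv_deriv_nonpos_of_isLocalMax
    ((hx.symm ▸ hf.continuousAt).comp (hline 0).continuousAt)
    (by simpa only [IsLocalMax, IsMaxFilter, Function.comp, hx] using hcont.eventually hmax)

variable {D : Set (ℝ × ℝ)} {u φ : ℝ × ℝ → ℝ} {q : ℝ × ℝ}

lemma fderiv_fderiv_apply_pair_self (hu : ContDiffAt ℝ 2 u q) (a b : ℝ) :
    fderiv ℝ (fderiv ℝ u) q (a, b) (a, b) =
      a ^ 2 * pdx (pdx u) q + 2 * a * b * pdy (pdx u) q + b ^ 2 * pdy (pdy u) q := by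
  have hpair : ((a, b) : ℝ × ℝ) = a • (1, 0) + b • (0, 1) := by simp
  have hxx : fderiv ℝ (fderiv ℝ u) q (1, 0) (1, 0) = pdx (pdx u) q :=
    (fderiv_fderiv_apply hu _ _).symm
  have hxy : fderiv ℝ (fderiv ℝ u) q (1, 0) (0, 1) = pdy (pdx u) q :=
    (fderiv_fderiv_apply hu _ _).symm.trans (pdx_pdy_comm hu)
  have hyx : fderiv ℝ (fderiv ℝ u) q (0, 1) (1, 0) = pdy (pdx u) q :=
    (fderiv_fderiv_apply hu _ _).symm
  have hyy : fderiv ℝ (fderiv ℝ u) q (0, 1) (0, 1) = pdy (pdy u) q :=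
    (fderiv_fderiv_apply hu _ _).symm
  rw [hpair]
  simp only [map_add, map_smul, add_apply, smul_apply, smul_eq_mul, hxx, hxy, hyx, hyy]
  ring

lemma translatorOp_le_of_isLocalMax_sub (hu : ContDiffAt ℝ 2 u q) (hφ : ContDiffAt ℝ 2 φ q)
    (hmax : IsLocalMax (fun z => u z - φ z) q) : translatorOp u q ≤ translatorOp φ q := by
  have hfderiv : fderiv ℝ u q = fderiv ℝ φ q := by
    rw [← sub_eq_zero, ← fderiv_fun_sub (hu.differentiableAt two_ne_zero)
      (hφ.differentiableAt two_ne_zero), hmax.fderiv_eq_zero]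
  have hx : pdx u q = pdx φ q := congr($hfderiv (1, 0))
  have hy : pdy u q = pdy φ q := congr($hfderiv (0, 1))
  have hhess (a b : ℝ) :
      a ^ 2 * pdx (pdx u) q + 2 * a * b * pdy (pdx u) q + b ^ 2 * pdy (pdy u) q ≤
      a ^ 2 * pdx (pdx φ) q + 2 * a * b * pdy (pdx φ) q + b ^ 2 * pdy (pdy φ) q := by
    have hsub : fderiv ℝ (fun z => u z - φ z) =ᶠ[nhds q] fun z => fderiv ℝ u z - fderiv ℝ φ z := by
      filter_upwards [hu.eventually (by simp), hφ.eventually (by simp)] with z hzu hzφ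
      exact fderiv_fun_sub (hzu.differentiableAt two_ne_zero) (hzφ.differentiableAt two_ne_zero)
    have hd {v : ℝ × ℝ → ℝ} (hv : ContDiffAt ℝ 2 v q) : DifferentiableAt ℝ (fderiv ℝ v) q :=
      (hv.fderiv_right (m := 1) (by norm_num)).differentiableAt one_ne_zero
    have hle := fderiv_fderiv_nonpos_of_isLocalMax (hu.sub hφ) hmax (a, b)
    rw [hsub.fderiv_eq, fderiv_fun_sub (hd hu) (hd hφ), sub_apply, sub_apply, sub_nonpos] at hle
    rwa [← fderiv_fderiv_apply_pair_self hu, ← fderiv_fderiv_apply_pair_self hφ]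
  -- The second-order part of `translatorOp v` is the trace of the Hessian of `v` plus its value on
  -- the rotated gradient `(v_y, -v_x)`.
  have hrot := hhess (pdy φ q) (-pdx φ q)
  rw [translatorOp, translatorOp, hx, hy]
  linarith [hhess 1 0, hhess 0 1]

lemma exists_isLocalMax_of_frontier_nonpos {X : Type*} [PseudoMetricSpace X] [ProperSpace X]
    {D : Set X} {f : X → ℝ} {x : X} (hD : IsOpen D) (hDb : Bornology.IsBounded D)
    (hf : ContinuousOn f D) (hbd : ∀ z ∈ frontier D, ∀ᶠ y in nhdsWithin z D, f y ≤ 0)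
    (hx : x ∈ D) (hpos : 0 < f x) : ∃ z ∈ D, IsLocalMax f z := by
  let g : X → ℝ := D.indicator fun z => max (f z) 0
  have hgD {z} (hz : z ∈ D) : g z = max (f z) 0 := indicator_of_mem hz _
  have hg : Continuous g := by
    refine continuous_iff_continuousAt.2 fun z => ?_
    by_cases hz : z ∈ D
    · refine ContinuousAt.congr (f := fun y => max (f y) 0)
        ((hf.continuousAt (hD.mem_nhds hz)).max continuousAt_const) ?_
      filter_upwards [hD.mem_nhds hz] with y hy using (hgD hy).symm
    · refine continuousAt_const.congr (f := fun _ => 0) ?_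
      filter_upwards [eventually_imp_of_frontier hD hz (hbd z)] with y hy
      by_cases hyD : y ∈ D
      · rw [hgD hyD, max_eq_right (hy hyD)]
      · exact (indicator_of_notMem hyD _).symm
  have hsupp : HasCompactSupport g := .intro hDb.isCompact_closure fun z hz =>
    indicator_of_notMem (fun h => hz (subset_closure h)) _
  have : Nonempty X := ⟨x⟩
  obtain ⟨z, hz⟩ := hg.exists_forall_ge_of_hasCompactSupport hsupp
  have hgz : 0 < g z := (lt_max_of_lt_left hpos).trans_le (hgD hx ▸ hz x)
  have hzD : z ∈ D := by
    by_contra h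
    exact hgz.ne' (indicator_of_notMem h _)
  have hgfz : g z = f z := by
    rw [hgD hzD] at hgz ⊢
    exact max_eq_left (by simpa using hgz : 0 < f z).le
  refine ⟨z, hzD, ?_⟩
  filter_upwards [hD.mem_nhds hzD] with y hy
  exact (le_max_left _ _).trans ((hgD hy ▸ hz y).trans_eq hgfz)

theorem le_of_translatorOp_lt (hD : IsOpen D) (hDb : Bornology.IsBounded D)
    (hu : ContDiffOn ℝ 2 u D) (hφ : ContDiffOn ℝ 2 φ D)
    (hlt : ∀ q ∈ D, translatorOp φ q < translatorOp u q)
    (hbd : ∀ z ∈ frontier D, ∀ᶠ q in nhdsWithin z D, u q ≤ φ q) (hq : q ∈ D) : u q ≤ φ q := by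
  by_contra! hpos
  obtain ⟨z, hz, hmax⟩ := exists_isLocalMax_of_frontier_nonpos hD hDb
    (hu.continuousOn.sub hφ.continuousOn) (fun z hz => (hbd z hz).mono fun y => sub_nonpos.2) hq
    (sub_pos.2 hpos)
  exact (hlt z hz).not_ge <| translatorOp_le_of_isLocalMax_sub (hu.contDiffAt (hD.mem_nhds hz))
    (hφ.contDiffAt (hD.mem_nhds hz)) hmax

end Comparison

section Barrier

variable {Ω : Set (ℝ × ℝ)} {u : ℝ × ℝ → ℝ} {a b e k β : ℝ} {q : ℝ × ℝ}

/-- When `a² + b² = 1`, the signed distance from `q` to the line `a x + b y + e = 0`. -/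
def lineDist (a b e : ℝ) (q : ℝ × ℝ) : ℝ := a * q.1 + b * q.2 + e

/-- When `a² + b² = 1`, a coordinate along the lines with unit normal `(a, b)`. -/
def lineCoord (a b : ℝ) : ℝ × ℝ → ℝ := lineDist (-b) a 0

/-- The barrier for the translator equation, with logarithmic growth at the line
`a x + b y + e = 0`. -/
def logBarrier (a b e k β K : ℝ) (q : ℝ × ℝ) : ℝ :=
  K - β * log (lineDist a b e q) - k / 2 * lineCoord a b q ^ 2

lemma contDiff_lineDist {n : WithTop ℕ∞} : ContDiff ℝ n (lineDist a b e) := by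
  unfold lineDist
  fun_prop

lemma fderiv_lineDist_apply (v : ℝ × ℝ) : fderiv ℝ (lineDist a b e) q v = a * v.1 + b * v.2 := by
  have h : HasFDerivAt (lineDist a b e)
      (a • ContinuousLinearMap.fst ℝ ℝ ℝ + b • ContinuousLinearMap.snd ℝ ℝ ℝ) q :=
    ((hasFDerivAt_fst.const_mul a).add (hasFDerivAt_snd.const_mul b)).add_const e
  rw [h.fderiv]
  rfl

lemma contDiffAt_logBarrier {n : WithTop ℕ∞} {K : ℝ} (hq : 0 < lineDist a b e q) :
    ContDiffAt ℝ n (logBarrier a b e k β K) q :=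
  (contDiffAt_const.sub (contDiffAt_const.mul (contDiff_lineDist.contDiffAt.log hq.ne'))).sub
    (contDiffAt_const.mul (contDiff_lineDist.contDiffAt.pow 2))

lemma fderiv_logBarrier_apply {K : ℝ} (hq : 0 < lineDist a b e q) (v : ℝ × ℝ) :
    fderiv ℝ (logBarrier a b e k β K) q v =
      -β * (a * v.1 + b * v.2) / lineDist a b e q -
        k * lineCoord a b q * (-b * v.1 + a * v.2) := by
  have hP : HasFDerivAt (lineDist a b e) _ q :=
    (contDiff_lineDist.differentiable one_ne_zero q).hasFDerivAt
  have hS : HasFDerivAt (lineCoord a b) _ q :=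
    (contDiff_lineDist.differentiable one_ne_zero q).hasFDerivAt
  have h : HasFDerivAt (logBarrier a b e k β K) _ q :=
    ((hP.log hq.ne').const_mul β).const_sub K |>.sub ((hS.pow 2).const_mul (k / 2))
  rw [h.fderiv]
  simp only [lineCoord, sub_apply, neg_apply, smul_apply, fderiv_lineDist_apply, smul_eq_mul]
  field

lemma fderiv_div_lineDist_add_mul_lineCoord_apply (m n : ℝ) (hq : 0 < lineDist a b e q)
    (v : ℝ × ℝ) : fderiv ℝ (fun z => m / lineDist a b e z + n * lineCoord a b z) q v =
      -m * (a * v.1 + b * v.2) / lineDist a b e q ^ 2 + n * (-b * v.1 + a * v.2) := by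
  have hP : HasFDerivAt (lineDist a b e) _ q :=
    (contDiff_lineDist.differentiable one_ne_zero q).hasFDerivAt
  have hS : HasFDerivAt (lineCoord a b) _ q :=
    (contDiff_lineDist.differentiable one_ne_zero q).hasFDerivAt
  have h : HasFDerivAt (fun z => m / lineDist a b e z + n * lineCoord a b z) _ q :=
    ((hasDerivAt_inv hq.ne').comp_hasFDerivAt q hP |>.const_mul m).add (hS.const_mul n)
  rw [h.fderiv]
  simp only [add_apply, smul_apply, fderiv_lineDist_apply, smul_eq_mul]
  field

lemma translatorOp_logBarrier {K : ℝ} (hab : a ^ 2 + b ^ 2 = 1) (hq : 0 < lineDist a b e q) :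
    translatorOp (logBarrier a b e k β K) q =
      β / lineDist a b e q ^ 2 * (1 + k ^ 2 * lineCoord a b q ^ 2 - β * (1 + k))
        - (1 + k + k ^ 2 * lineCoord a b q ^ 2) := by
  set φ := logBarrier a b e k β K
  have hnear : ∀ᶠ z in nhds q, 0 < lineDist a b e z :=
    (contDiff_lineDist (n := 0)).continuous.continuousAt.eventually (lt_mem_nhds hq)
  have hx : pdx φ =ᶠ[nhds q] fun z => -β * a / lineDist a b e z + k * b * lineCoord a b z := by
    filter_upwards [hnear] with z hz
    rw [pdx, fderiv_logBarrier_apply hz]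
    ring
  have hy : pdy φ =ᶠ[nhds q] fun z => -β * b / lineDist a b e z + -k * a * lineCoord a b z := by
    filter_upwards [hnear] with z hz
    rw [pdy, fderiv_logBarrier_apply hz]
    ring
  have hxx : pdx (pdx φ) q = β * a ^ 2 / lineDist a b e q ^ 2 - k * b ^ 2 := by
    rw [pdx, hx.fderiv_eq, fderiv_div_lineDist_add_mul_lineCoord_apply _ _ hq]
    ring
  have hxy : pdy (pdx φ) q = β * a * b / lineDist a b e q ^ 2 + k * a * b := by
    rw [pdy, hx.fderiv_eq, fderiv_div_lineDist_add_mul_lineCoord_apply _ _ hq]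
    ring
  have hyy : pdy (pdy φ) q = β * b ^ 2 / lineDist a b e q ^ 2 - k * a ^ 2 := by
    rw [pdy, hy.fderiv_eq, fderiv_div_lineDist_add_mul_lineCoord_apply _ _ hq]
    ring
  rw [translatorOp, hxx, hxy, hyy, hx.eq_of_nhds, hy.eq_of_nhds]
  set P := lineDist a b e q
  set S := lineCoord a b q
  linear_combination (β / P ^ 2 - k + (β * k ^ 2 * S ^ 2 - k * β ^ 2) / P ^ 2 *
    (a ^ 2 + b ^ 2 + 1) - (β ^ 2 / P ^ 2 + k ^ 2 * S ^ 2)) * hab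

lemma translatorOp_logBarrier_neg {K : ℝ} (hab : a ^ 2 + b ^ 2 = 1) (hq : 0 < lineDist a b e q)
    (hβ : 0 ≤ β) (hk : 0 ≤ k) (hS : 1 + k ^ 2 * lineCoord a b q ^ 2 ≤ β * (1 + k)) :
    translatorOp (logBarrier a b e k β K) q < 0 := by
  have hP : β / lineDist a b e q ^ 2 * (1 + k ^ 2 * lineCoord a b q ^ 2 - β * (1 + k)) ≤ 0 :=
    mul_nonpos_of_nonneg_of_nonpos (by positivity) (by linarith)
  rw [translatorOp_logBarrier hab hq]
  linarith [(by positivity : 0 < 1 + k + k ^ 2 * lineCoord a b q ^ 2)]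

lemma logBarrier_ge {C B R : ℝ} (hk : 0 ≤ k) (hR : |lineCoord a b q| ≤ R) :
    C + β * (B - log (lineDist a b e q)) ≤
      logBarrier a b e k β (C + β * B + k / 2 * R ^ 2) q := by
  have hS : lineCoord a b q ^ 2 ≤ R ^ 2 := sq_le_sq.2 (hR.trans (le_abs_self R))
  have := mul_le_mul_of_nonneg_left hS (by positivity : 0 ≤ k / 2)
  rw [logBarrier]
  linarith

lemma eventually_le_mul_sub_log_lineDist {B M : ℝ} (hPq : lineDist a b e q = 0) (hβ : 0 < β) :
    ∀ᶠ z in nhdsWithin q {z | 0 < lineDist a b e z}, M ≤ β * (B - log (lineDist a b e z)) := by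
  have hlog : Tendsto (fun z => log (lineDist a b e z))
      (nhdsWithin q {z | 0 < lineDist a b e z}) atBot :=
    tendsto_log_nhdsGT_zero.comp <| tendsto_nhdsWithin_iff.2
      ⟨hPq ▸ ((contDiff_lineDist (n := 0)).continuous.tendsto q).mono_left nhdsWithin_le_nhds,
        eventually_mem_nhdsWithin⟩
  filter_upwards [hlog.eventually_le_atBot (B - M / β)] with z hz
  rw [← div_le_iff₀' hβ]
  linarith

lemma le_logBarrier {C B R : ℝ} (hΩ : IsOpen Ω) (hΩb : Bornology.IsBounded Ω)
    (hu : IsSubtranslatorOn Ω u) (hab : a ^ 2 + b ^ 2 = 1)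
    (hbd : ∀ z ∈ frontier Ω, 0 ≤ lineDist a b e z → ∀ᶠ q in nhdsWithin z Ω, u q ≤ C)
    (hB : ∀ q ∈ Ω, lineDist a b e q ≤ B) (hR : ∀ q ∈ Ω, |lineCoord a b q| ≤ R)
    (hβ : 0 < β) (hk : 0 ≤ k) (hkβ : 1 + k ^ 2 * R ^ 2 ≤ β * (1 + k))
    (hq : q ∈ Ω) (hPq : 0 < lineDist a b e q) :
    u q ≤ logBarrier a b e k β (C + β * B + k / 2 * R ^ 2) q := by
  have hPcont : Continuous (lineDist a b e) := (contDiff_lineDist (n := 0)).continuous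
  have hD : IsOpen (Ω ∩ {z | 0 < lineDist a b e z}) := hΩ.inter (isOpen_lt continuous_const hPcont)
  refine le_of_translatorOp_lt hD (hΩb.subset inter_subset_left) (hu.1.mono inter_subset_left)
    (fun z hz => (contDiffAt_logBarrier hz.2).contDiffWithinAt) (fun z hz => ?_) (fun z hz => ?_)
    ⟨hq, hPq⟩
  · have hS : lineCoord a b z ^ 2 ≤ R ^ 2 := sq_le_sq.2 ((hR z hz.1).trans (le_abs_self R))
    have hkS : 1 + k ^ 2 * lineCoord a b z ^ 2 ≤ β * (1 + k) := by
      refine le_trans ?_ hkβ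
      gcongr
    exact (translatorOp_logBarrier_neg hab hz.2 hβ.le hk hkS).trans_le (hu.2 z hz.1)
  rw [hD.frontier_eq] at hz
  have hPz : 0 ≤ lineDist a b e z :=
    closure_minimal (fun y hy => le_of_lt hy.2) (isClosed_le continuous_const hPcont) hz.1
  by_cases hzΩ : z ∈ Ω
  · have hPz0 : lineDist a b e z = 0 := hPz.antisymm' (not_lt.1 fun h => hz.2 ⟨hzΩ, h⟩)
    have hu_near : ∀ᶠ y in nhds z, u y < u z + 1 :=
      (hu.1.continuousOn.continuousAt (hΩ.mem_nhds hzΩ)).eventually (gt_mem_nhds (lt_add_one _))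
    have hlog_near : ∀ᶠ y in nhdsWithin z {z | 0 < lineDist a b e z},
        u z + 1 - C ≤ β * (B - log (lineDist a b e y)) :=
      eventually_le_mul_sub_log_lineDist hPz0 hβ
    filter_upwards [hlog_near.filter_mono (nhdsWithin_mono z inter_subset_right),
      hu_near.filter_mono nhdsWithin_le_nhds, eventually_mem_nhdsWithin] with y hylog hy hyD
    linarith [logBarrier_ge (e := e) (C := C) (B := B) (β := β) hk (hR y hyD.1)]
  · have hzf : z ∈ frontier Ω :=
      hΩ.frontier_eq ▸ ⟨closure_mono inter_subset_left hz.1, hzΩ⟩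
    filter_upwards [(hbd z hzf hPz).filter_mono (nhdsWithin_mono z inter_subset_left),
      eventually_mem_nhdsWithin] with y hy hyD
    have hlogB : log (lineDist a b e y) ≤ B := (log_le_self hyD.2.le).trans (hB y hyD.1)
    have := mul_nonneg hβ.le (sub_nonneg.2 hlogB)
    linarith [logBarrier_ge (e := e) (C := C) (B := B) (β := β) hk (hR y hyD.1)]

theorem exists_le_sub_mul_log_lineDist {C : ℝ} (hΩ : IsOpen Ω) (hΩb : Bornology.IsBounded Ω)
    (hu : IsSubtranslatorOn Ω u) (hab : a ^ 2 + b ^ 2 = 1)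
    (hbd : ∀ z ∈ frontier Ω, 0 < lineDist a b e z → ∀ᶠ q in nhdsWithin z Ω, u q ≤ C) :
    ∃ β : ℝ, β < 1 ∧ ∃ K, ∀ q ∈ Ω, 0 < lineDist a b e q →
      u q ≤ K - β * log (lineDist a b e q) := by
  have hbounded (a b e : ℝ) : ∃ B, ∀ q ∈ Ω, |lineDist a b e q| ≤ B := by
    obtain ⟨B, hB⟩ := hΩb.isCompact_closure.exists_bound_of_continuousOn
      (contDiff_lineDist (a := a) (b := b) (e := e) (n := 0)).continuous.continuousOn
    exact ⟨B, fun q hq => hB q (subset_closure hq)⟩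
  obtain ⟨B, hB⟩ := hbounded a b e
  obtain ⟨R, hR⟩ := hbounded (-b) a 0
  -- `k` and `β` solve `1 + k²R² = β(1 + k)`, with `β < 1` because `k R² < 1`.
  let k := (1 + R ^ 2)⁻¹
  let β := (1 + k ^ 2 * R ^ 2) / (1 + k)
  have hk : 0 < k := by positivity
  have hβ : 0 < β := by positivity
  have hkR : k * (1 + R ^ 2) = 1 := inv_mul_cancel₀ (by positivity)
  have hβ1 : β < 1 := by
    rw [div_lt_one (by positivity)]
    nlinarith
  have hkβ : 1 + k ^ 2 * R ^ 2 ≤ β * (1 + k) := (div_mul_cancel₀ _ (by positivity)).ge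
  let K := C + β * B + k / 2 * R ^ 2
  refine ⟨β, hβ1, K, fun q hq hPq => ?_⟩
  -- Nothing is known about `u` on the line itself, so the barrier is moved off it by `ε`.
  have hshift (ε : ℝ) (hε : ε ∈ Ioo 0 (lineDist a b e q)) :
      u q ≤ K - β * log (lineDist a b e q - ε) := by
    have he (z : ℝ × ℝ) : lineDist a b (e - ε) z = lineDist a b e z - ε := by
      simp only [lineDist]
      ring
    have hle := le_logBarrier (e := e - ε) (B := B) hΩ hΩb hu hab
      (fun z hz hPz => hbd z hz (by linarith [he z, hε.1]))
      (fun z hz => by linarith [he z, hε.1, le_of_abs_le (hB z hz)]) hR hβ hk.le hkβ hq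
      (by linarith [he q, hε.2])
    rw [logBarrier, he] at hle
    exact hle.trans (sub_le_self _ (by positivity))
  have hlim : Tendsto (fun ε => K - β * log (lineDist a b e q - ε)) (nhdsWithin 0 (Ioi 0))
      (nhds (K - β * log (lineDist a b e q - 0))) := by
    refine ContinuousAt.tendsto ?_ |>.mono_left nhdsWithin_le_nhds
    fun_prop (disch := simpa using hPq.ne')
  simpa only [sub_zero] using ge_of_tendsto hlim (eventually_of_mem (Ioo_mem_nhdsGT hPq) hshift)

end Barrier

section Parallelogram

variable {α a b w w' L L' : ℝ} {u : ℝ × ℝ → ℝ}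

/-- The area-preserving shear `(ξ, y) ↦ (ξ + y cot α, y)`, under which the parallelograms
`P(α, w, L)` are the images of rectangles. -/
def shear (α : ℝ) : (ℝ × ℝ) ≃ₜ (ℝ × ℝ) where
  toFun z := (z.1 + z.2 * cos α / sin α, z.2)
  invFun z := (z.1 - z.2 * cos α / sin α, z.2)
  left_inv z := by simp
  right_inv z := by simp
  continuous_toFun := by fun_prop
  continuous_invFun := by fun_prop

lemma shear_apply (z : ℝ × ℝ) : shear α z = (z.1 + z.2 * cos α / sin α, z.2) := rfl

lemma measurePreserving_shear : MeasurePreserving (shear α) := by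
  have hskew : MeasurePreserving (fun p : ℝ × ℝ => (p.1, p.2 + p.1 * cos α / sin α))
      (volume.prod volume) (volume.prod volume) :=
    (MeasurePreserving.id volume).skew_product (g := fun y x => x + y * cos α / sin α)
      (by fun_prop) (.of_forall fun y => map_add_right_eq_self volume _)
  exact (Measure.measurePreserving_swap.comp hskew).comp Measure.measurePreserving_swap

lemma pgram_eq_image_shear : Pgram α w L = shear α '' (Ioo 0 L ×ˢ Ioo 0 w) := by
  ext ⟨x, y⟩
  simp only [Pgram, Homeomorph.image_eq_preimage_symm, mem_preimage, mem_prod, mem_Ioo,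
    mem_ofPred_eq]
  change _ ↔ (0 < x - y * cos α / sin α ∧ x - y * cos α / sin α < L) ∧ 0 < y ∧ y < w
  rw [sub_pos, sub_lt_iff_lt_add]
  tauto

lemma shear_mem_pgram_iff {z : ℝ × ℝ} : shear α z ∈ Pgram α w L ↔ z ∈ Ioo 0 L ×ˢ Ioo 0 w := by
  rw [pgram_eq_image_shear, (shear α).injective.mem_set_image]

lemma preimage_shear_pgram : shear α ⁻¹' Pgram α w L = Ioo 0 L ×ˢ Ioo 0 w :=
  ext fun _ => shear_mem_pgram_iff

lemma isOpen_image_shear : IsOpen (shear α '' (Ioo a b ×ˢ Ioo 0 w)) :=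
  (shear α).isOpenMap _ (isOpen_Ioo.prod isOpen_Ioo)

lemma isBounded_image_shear : Bornology.IsBounded (shear α '' (Ioo a b ×ˢ Ioo 0 w)) :=
  ((isCompact_Icc.prod isCompact_Icc).image (shear α).continuous).isBounded.subset
    (image_mono (prod_mono Ioo_subset_Icc_self Ioo_subset_Icc_self))

lemma closure_image_shear (hab : a < b) (hw : 0 < w) :
    closure (shear α '' (Ioo a b ×ˢ Ioo 0 w)) = shear α '' (Icc a b ×ˢ Icc 0 w) := by
  rw [← Homeomorph.image_closure, closure_prod_eq, closure_Ioo hab.ne, closure_Ioo hw.ne]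

lemma frontier_image_shear (hab : a < b) (hw : 0 < w) :
    frontier (shear α '' (Ioo a b ×ˢ Ioo 0 w)) =
      shear α '' ((Icc a b ×ˢ Icc 0 w) \ (Ioo a b ×ˢ Ioo 0 w)) := by
  rw [isOpen_image_shear.frontier_eq, closure_image_shear hab hw, image_sdiff (shear α).injective]

lemma isOpen_pgram : IsOpen (Pgram α w L) := pgram_eq_image_shear ▸ isOpen_image_shear

lemma isBounded_pgram : Bornology.IsBounded (Pgram α w L) :=
  pgram_eq_image_shear ▸ isBounded_image_shear

lemma isPreconnected_pgram : IsPreconnected (Pgram α w L) :=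
  pgram_eq_image_shear ▸ (isPreconnected_Ioo.prod isPreconnected_Ioo).image _
    (shear α).continuous.continuousOn

lemma pgram_mono (hw : w ≤ w') (hL : L ≤ L') : Pgram α w L ⊆ Pgram α w' L' := by
  rw [pgram_eq_image_shear, pgram_eq_image_shear]
  gcongr

/-- The function `u` has boundary value `-∞` on the horizontal sides of `P(α, w, L)`, which are
parametrized by `shear α`. -/
def TendsBotOnHorizontalSides (α w L : ℝ) (u : ℝ × ℝ → ℝ) : Prop :=
  ∀ ξ ∈ Ioo 0 L, ∀ y ∈ ({0, w} : Set ℝ), Tendsto u (nhdsWithin (shear α (ξ, y)) (Pgram α w L)) atBot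

/-- The function `u` has boundary value `+∞` on the nonhorizontal sides of `P(α, w, L)`, which are
parametrized by `shear α`. -/
def TendsTopOnSlantedSides (α w L : ℝ) (u : ℝ × ℝ → ℝ) : Prop :=
  ∀ ξ ∈ ({0, L} : Set ℝ), ∀ y ∈ Ioo 0 w, Tendsto u (nhdsWithin (shear α (ξ, y)) (Pgram α w L)) atTop

lemma TendsBotOnHorizontalSides.mono (h : TendsBotOnHorizontalSides α w L' u) (hL : L ≤ L') :
    TendsBotOnHorizontalSides α w L u := fun ξ hξ y hy =>
  (h ξ (Ioo_subset_Ioo_right hL hξ) y hy).mono_left (nhdsWithin_mono _ (pgram_mono le_rfl hL))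

lemma IsSubtranslatorOn.mono {Ω Ω' : Set (ℝ × ℝ)} (h : IsSubtranslatorOn Ω' u) (hΩ : Ω ⊆ Ω') :
    IsSubtranslatorOn Ω u :=
  ⟨h.1.mono hΩ, fun q hq => h.2 q (hΩ hq)⟩

lemma IsSupertranslatorOn.mono {Ω Ω' : Set (ℝ × ℝ)} (h : IsSupertranslatorOn Ω' u) (hΩ : Ω ⊆ Ω') :
    IsSupertranslatorOn Ω u :=
  ⟨h.1.mono hΩ, fun q hq => h.2 q (hΩ hq)⟩

end Parallelogram

section Growth

variable {α a b c w L : ℝ} {u : ℝ × ℝ → ℝ}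

lemma exists_eventually_le_of_isCompact {X : Type*} [TopologicalSpace X] {C Ω : Set X} {u : X → ℝ}
    (hC : IsCompact C) (h : ∀ z ∈ C, ∃ M, ∀ᶠ q in nhdsWithin z Ω, u q ≤ M) :
    ∃ M, ∀ z ∈ C, ∀ᶠ q in nhdsWithin z Ω, u q ≤ M := by
  refine hC.induction_on (by simp) (fun s t hst ⟨M, hM⟩ => ⟨M, fun z hz => hM z (hst hz)⟩)
    (fun s t ⟨M, hM⟩ ⟨M', hM'⟩ => ⟨max M M', ?_⟩) (fun z hz => ?_)
  · rintro z (hz | hz)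
    · exact (hM z hz).mono fun q hq => le_max_of_le_left hq
    · exact (hM' z hz).mono fun q hq => le_max_of_le_right hq
  · obtain ⟨M, hM⟩ := h z hz
    exact ⟨_, mem_nhdsWithin_of_mem_nhds (eventually_nhds_nhdsWithin.2 hM), M, fun _ => id⟩

-- The points in question are those on the horizontal sides and on the segment `ξ = m`.
lemma exists_eventually_le_shear {m : ℝ} (hu : ContinuousOn u (Pgram α w L))
    (hbot : TendsBotOnHorizontalSides α w L u) (hm : m ∈ Ioo 0 L) :
    ∃ M, ∀ ξ ∈ Ioo 0 L, ∀ y ∈ Icc 0 w, (y ∈ Ioo 0 w → ξ = m) →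
      ∀ᶠ q in nhdsWithin (shear α (ξ, y)) (Pgram α w L), u q ≤ M := by
  have hends (M : ℝ) {ξ y : ℝ} (hξ : ξ ∈ Ioo 0 L) (hy : y ∈ Icc 0 w) (hy' : y ∉ Ioo 0 w) :
      ∀ᶠ q in nhdsWithin (shear α (ξ, y)) (Pgram α w L), u q ≤ M := by
    refine (hbot ξ hξ y ?_).eventually_le_atBot M
    rcases eq_endpoints_or_mem_Ioo_of_mem_Icc hy with rfl | rfl | hy
    exacts [by simp, by simp, absurd hy hy']
  have hC : IsCompact ((fun y => shear α (m, y)) '' Icc 0 w) :=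
    isCompact_Icc.image ((shear α).continuous.comp (Continuous.prodMk_right m))
  obtain ⟨M, hM⟩ := exists_eventually_le_of_isCompact hC (Ω := Pgram α w L) (u := u) <| by
    rintro _ ⟨y, hy, rfl⟩
    by_cases hy' : y ∈ Ioo 0 w
    · have hz : shear α (m, y) ∈ Pgram α w L := shear_mem_pgram_iff.2 ⟨hm, hy'⟩
      exact ⟨_, ((hu _ hz).eventually (gt_mem_nhds (lt_add_one _))).mono fun q hq => le_of_lt hq⟩
    · exact ⟨0, hends 0 hm hy hy'⟩
  refine ⟨M, fun ξ hξ y hy hm' => ?_⟩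
  by_cases hy' : y ∈ Ioo 0 w
  · exact hm' hy' ▸ hM _ (mem_image_of_mem _ hy)
  · exact hends M hξ hy hy'

-- Up to the factor `sin α`, `σ (ξ - c)` is the distance to the side `ξ = c`, where `σ = 1` for the
-- left side and `σ = -1` for the right one.
lemma exists_le_sub_mul_log {m M σ : ℝ} (hα : 0 < sin α) (hσ : σ ^ 2 = 1) (hw : 0 < w)
    (ha : 0 ≤ a) (hab : a < b) (hb : b ≤ L) (hu : IsSubtranslatorOn (Pgram α w L) u)
    (hM : ∀ ξ ∈ Ioo 0 L, ∀ y ∈ Icc 0 w, (y ∈ Ioo 0 w → ξ = m) →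
      ∀ᶠ q in nhdsWithin (shear α (ξ, y)) (Pgram α w L), u q ≤ M)
    (hc : ∀ ξ ∈ Ioo a b, 0 < σ * (ξ - c))
    (hm : ∀ ξ ∈ Icc a b, 0 < σ * (ξ - c) → ξ ∈ Ioo 0 L ∧ (ξ ∉ Ioo a b → ξ = m)) :
    ∃ β : ℝ, β < 1 ∧ ∃ K, ∀ z ∈ Ioo a b ×ˢ Ioo 0 w,
      u (shear α z) ≤ K - β * log (σ * (z.1 - c)) := by
  have hsub : shear α '' (Ioo a b ×ˢ Ioo 0 w) ⊆ Pgram α w L := by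
    rw [pgram_eq_image_shear]
    gcongr
  have hdist (z : ℝ × ℝ) : lineDist (σ * sin α) (-σ * cos α) (-σ * sin α * c) (shear α z) =
      sin α * (σ * (z.1 - c)) := by
    simp only [lineDist, shear_apply]
    field
  obtain ⟨β, hβ, K, hK⟩ := exists_le_sub_mul_log_lineDist (u := u) (C := M) (a := σ * sin α)
    (b := -σ * cos α) (e := -σ * sin α * c) isOpen_image_shear isBounded_image_shear (hu.mono hsub)
    (by linear_combination σ ^ 2 * sin_sq_add_cos_sq α + hσ) <| by
      rw [frontier_image_shear hab hw]
      rintro _ ⟨z, hz, rfl⟩ hpos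
      obtain ⟨hz1, hzm⟩ := hm z.1 hz.1.1 (pos_of_mul_pos_right (hdist z ▸ hpos) hα.le)
      exact (hM z.1 hz1 z.2 hz.1.2 fun hy => hzm fun hx => hz.2 ⟨hx, hy⟩).filter_mono
        (nhdsWithin_mono _ hsub)
  refine ⟨β, hβ, K - β * log (sin α), fun z hz => ?_⟩
  have hz' := hc z.1 hz.1
  have hle := hK _ (mem_image_of_mem _ hz) (hdist z ▸ mul_pos hα hz')
  rw [hdist, log_mul hα.ne' hz'.ne'] at hle
  linarith

lemma intervalIntegrable_exp_sub_mul_log {β : ℝ} (hβ : β < 1) (hL : 0 ≤ L) (K : ℝ) :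
    IntervalIntegrable (fun x => exp (K - β * log x)) volume 0 L := by
  have hrpow : IntervalIntegrable (fun x : ℝ => exp K * x ^ (-β)) volume 0 L :=
    (intervalIntegral.intervalIntegrable_rpow' (by linarith)).const_mul _
  refine hrpow.congr fun x hx => ?_
  rw [uIoc_of_le hL] at hx
  rw [rpow_def_of_pos hx.1, ← exp_add]
  ring_nf

theorem exists_integrableOn_exp_shear_le (hα : 0 < sin α) (hw : 0 < w) (hL : 0 < L)
    (hu : IsSubtranslatorOn (Pgram α w L) u) (hbot : TendsBotOnHorizontalSides α w L u) :
    ∃ g : ℝ → ℝ, IntegrableOn g (Ioo 0 L) ∧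
      ∀ z ∈ Ioo 0 L ×ˢ Ioo 0 w, exp (u (shear α z)) ≤ g z.1 := by
  obtain ⟨M, hM⟩ := exists_eventually_le_shear hu.1.continuousOn hbot
    (⟨half_pos hL, half_lt_self hL⟩ : L / 2 ∈ Ioo 0 L)
  obtain ⟨β₁, hβ₁, K₁, hK₁⟩ := exists_le_sub_mul_log (σ := 1) (c := 0) hα (one_pow 2) hw le_rfl
    (half_pos hL) (half_le_self hL.le) hu hM (fun ξ hξ => by linarith [hξ.1]) fun ξ hξ hpos =>
      ⟨⟨by linarith, by linarith [hξ.2]⟩, fun h =>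
        hξ.2.antisymm (not_lt.1 fun hlt => h ⟨by linarith, hlt⟩)⟩
  obtain ⟨β₂, hβ₂, K₂, hK₂⟩ := exists_le_sub_mul_log (σ := -1) (c := L) hα neg_one_sq hw
    (half_pos hL).le (half_lt_self hL) le_rfl hu hM (fun ξ hξ => by linarith [hξ.2])
    fun ξ hξ hpos => ⟨⟨by linarith [hξ.1], by linarith⟩, fun h =>
      hξ.1.antisymm' (not_lt.1 fun hlt => h ⟨hlt, by linarith⟩)⟩
  refine ⟨fun ξ => exp (K₁ - β₁ * log ξ) + exp (K₂ - β₂ * log (L - ξ)) + exp M, ?_, fun z hz => ?_⟩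
  · rw [← intervalIntegrable_iff_integrableOn_Ioo_of_le hL.le]
    have hleft := intervalIntegrable_exp_sub_mul_log hβ₁ hL.le K₁
    have hright := ((intervalIntegrable_exp_sub_mul_log hβ₂ hL.le K₂).comp_sub_left L).symm
    rw [sub_zero, sub_self] at hright
    exact (hleft.add hright).add intervalIntegrable_const
  · have hpos₁ := exp_pos (K₁ - β₁ * log z.1)
    have hpos₂ := exp_pos (K₂ - β₂ * log (L - z.1))
    rcases lt_trichotomy z.1 (L / 2) with hlt | heq | hgt
    · have := exp_le_exp.2 (hK₁ z ⟨⟨hz.1.1, hlt⟩, hz.2⟩)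
      rw [one_mul, sub_zero] at this
      linarith [exp_pos M]
    · have := exp_le_exp.2 <| (hM z.1 hz.1 z.2 (Ioo_subset_Icc_self hz.2)
        fun _ => heq).self_of_nhdsWithin (shear_mem_pgram_iff.2 hz)
      linarith
    · have := exp_le_exp.2 (hK₂ z ⟨⟨hgt, hz.1.2⟩, hz.2⟩)
      rw [neg_one_mul, neg_sub] at this
      linarith [exp_pos M]

end Growth

section Slices

variable {α w L y : ℝ} {u : ℝ × ℝ → ℝ} {g : ℝ → ℝ}

lemma indicator_pgram_shear {f : ℝ × ℝ → ℝ} (hy : y ∈ Ioo 0 w) (ξ : ℝ) :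
    (Pgram α w L).indicator f (shear α (ξ, y)) =
      (Ioo 0 L).indicator (fun ξ => f (shear α (ξ, y))) ξ := by
  by_cases hξ : ξ ∈ Ioo 0 L
  · rw [indicator_of_mem hξ, indicator_of_mem (shear_mem_pgram_iff.2 ⟨hξ, hy⟩)]
  · rw [indicator_of_notMem hξ, indicator_of_notMem fun h => hξ (shear_mem_pgram_iff.1 h).1]

lemma integrableOn_exp_pgram (hu : ContinuousOn u (Pgram α w L)) (hg : IntegrableOn g (Ioo 0 L))
    (hle : ∀ z ∈ Ioo 0 L ×ˢ Ioo 0 w, exp (u (shear α z)) ≤ g z.1) :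
    IntegrableOn (fun q => exp (u q)) (Pgram α w L) := by
  rw [← measurePreserving_shear.integrableOn_comp_preimage (shear α).measurableEmbedding,
    preimage_shear_pgram]
  have hdom : IntegrableOn (fun z : ℝ × ℝ => g z.1) (Ioo 0 L ×ˢ Ioo 0 w) := by
    rw [IntegrableOn, Measure.volume_eq_prod, ← Measure.prod_restrict]
    exact hg.comp_fst _
  have hcont : ContinuousOn (fun z => exp (u (shear α z))) (Ioo 0 L ×ˢ Ioo 0 w) :=
    (hu.comp (shear α).continuous.continuousOn fun z => shear_mem_pgram_iff.2).rexp
  have hmeas : MeasurableSet (Ioo 0 L ×ˢ Ioo 0 w) := measurableSet_Ioo.prod measurableSet_Ioo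
  refine hdom.mono' (hcont.aestronglyMeasurable hmeas) ?_
  filter_upwards [ae_restrict_mem hmeas] with z hz
  simpa only [Function.comp_apply, norm_of_nonneg (exp_pos _).le] using hle z hz

lemma integrable_indicator_exp_shear (hu : ContinuousOn u (Pgram α w L))
    (hg : IntegrableOn g (Ioo 0 L))
    (hle : ∀ z ∈ Ioo 0 L ×ˢ Ioo 0 w, exp (u (shear α z)) ≤ g z.1) (hy : y ∈ Ioo 0 w) :
    Integrable fun ξ => (Pgram α w L).indicator (fun q => exp (u q)) (shear α (ξ, y)) := by
  simp only [indicator_pgram_shear hy]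
  rw [integrable_indicator_iff measurableSet_Ioo]
  have hcont : ContinuousOn (fun ξ => exp (u (shear α (ξ, y)))) (Ioo 0 L) :=
    (hu.comp ((shear α).continuous.comp (Continuous.prodMk_left y)).continuousOn
      fun ξ hξ => shear_mem_pgram_iff.2 ⟨hξ, hy⟩).rexp
  refine hg.mono' (hcont.aestronglyMeasurable measurableSet_Ioo) ?_
  filter_upwards [ae_restrict_mem measurableSet_Ioo] with ξ hξ
  simpa only [norm_of_nonneg (exp_pos _).le] using hle (ξ, y) ⟨hξ, hy⟩

lemma integrable_slice_exp (hu : ContinuousOn u (Pgram α w L))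
    (hg : IntegrableOn g (Ioo 0 L))
    (hle : ∀ z ∈ Ioo 0 L ×ˢ Ioo 0 w, exp (u (shear α z)) ≤ g z.1) (hy : y ∈ Ioo 0 w) :
    Integrable fun x => (Pgram α w L).indicator (fun q => exp (u q)) (x, y) :=
  ((measurePreserving_add_right volume (y * cos α / sin α)).integrable_comp_emb
    (measurableEmbedding_addRight _)).1 (integrable_indicator_exp_shear hu hg hle hy)

theorem tendsto_sliceIntegral_exp {y₀ : ℝ} (hu : ContinuousOn u (Pgram α w L))
    (hbot : TendsBotOnHorizontalSides α w L u) (hg : IntegrableOn g (Ioo 0 L))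
    (hle : ∀ z ∈ Ioo 0 L ×ˢ Ioo 0 w, exp (u (shear α z)) ≤ g z.1) (hy₀ : y₀ ∈ ({0, w} : Set ℝ)) :
    Tendsto (sliceIntegral (Pgram α w L) fun q => exp (u q)) (nhdsWithin y₀ (Ioo 0 w))
      (nhds 0) := by
  have hslice (y : ℝ) : ∫ ξ, (Pgram α w L).indicator (fun q => exp (u q)) (shear α (ξ, y)) =
      sliceIntegral (Pgram α w L) (fun q => exp (u q)) y :=
    integral_add_right_eq_self (μ := volume)
      (fun x => (Pgram α w L).indicator (fun q => exp (u q)) (x, y)) (y * cos α / sin α)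
  suffices Tendsto
      (fun y => ∫ ξ, (Pgram α w L).indicator (fun q => exp (u q)) (shear α (ξ, y)))
      (nhdsWithin y₀ (Ioo 0 w)) (nhds (∫ _ : ℝ, (0 : ℝ))) by
    simpa only [hslice, integral_zero] using this
  refine tendsto_integral_filter_of_dominated_convergence ((Ioo 0 L).indicator g) ?_ ?_
    ((integrable_indicator_iff measurableSet_Ioo).2 hg) (.of_forall fun ξ => ?_)
  · filter_upwards [self_mem_nhdsWithin] with y hy
    exact (integrable_indicator_exp_shear hu hg hle hy).aestronglyMeasurable
  · filter_upwards [self_mem_nhdsWithin] with y hy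
    refine .of_forall fun ξ => ?_
    rw [indicator_pgram_shear hy, norm_indicator_eq_indicator_norm]
    refine indicator_rel_indicator le_rfl fun hξ => ?_
    simpa only [norm_of_nonneg (exp_pos _).le] using hle (ξ, y) ⟨hξ, hy⟩
  by_cases hξ : ξ ∈ Ioo 0 L
  · have hpath : Tendsto (fun y => shear α (ξ, y)) (nhdsWithin y₀ (Ioo 0 w))
        (nhdsWithin (shear α (ξ, y₀)) (Pgram α w L)) :=
      ((shear α).continuous.comp (Continuous.prodMk_right ξ)).continuousWithinAt.tendsto_nhdsWithin
        fun y (hy : y ∈ Ioo 0 w) => shear_mem_pgram_iff.2 ⟨hξ, hy⟩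
    refine (tendsto_exp_atBot.comp ((hbot ξ hξ y₀ hy₀).comp hpath)).congr' ?_
    filter_upwards [self_mem_nhdsWithin] with y hy
    exact (indicator_of_mem (shear_mem_pgram_iff.2 ⟨hξ, hy⟩) fun q => exp (u q)).symm
  · refine tendsto_const_nhds.congr fun y => ?_
    exact (indicator_of_notMem (fun h => hξ (shear_mem_pgram_iff.1 h).1) _).symm

end Slices

section Rigidity

variable {α w w' L : ℝ} {u u₁ u₂ : ℝ × ℝ → ℝ}

lemma TendsTopOnSlantedSides.mono (h : TendsTopOnSlantedSides α w' L u) (hw : w ≤ w') :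
    TendsTopOnSlantedSides α w L u := fun ξ hξ y hy =>
  (h ξ hξ y (Ioo_subset_Ioo_right hw hy)).mono_left (nhdsWithin_mono _ (pgram_mono hw le_rfl))

lemma TendsTopOnSlantedSides.tendsto_of_mem_frontier (h : TendsTopOnSlantedSides α w L u)
    (hw : 0 < w) (hL : 0 < L) {z : ℝ × ℝ} (hz : z ∈ frontier (Pgram α w L))
    (hy : z.2 ∈ Ioo 0 w) : Tendsto u (nhdsWithin z (Pgram α w L)) atTop := by
  rw [pgram_eq_image_shear, frontier_image_shear hL hw] at hz
  obtain ⟨⟨ξ, y⟩, ⟨⟨hξ, -⟩, hmem⟩, rfl⟩ := hz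
  refine h ξ ?_ y hy
  rcases eq_endpoints_or_mem_Ioo_of_mem_Icc hξ with rfl | rfl | hξ
  exacts [by simp, by simp, absurd ⟨hξ, hy⟩ hmem]

lemma eventually_forall_mem_strip {K : Set (ℝ × ℝ)} (hK : IsCompact K)
    (hKw : ∀ z ∈ K, z.2 ∈ Ioo 0 w) (hu : ∀ z ∈ K, ContinuousAt u z) :
    ∀ᶠ δ in nhds (0 : ℝ), ∀ z ∈ K, z.2 ∈ Icc δ (w - δ) ∧ δ * u z ≤ 1 := by
  refine hK.eventually_forall_of_forall_eventually fun z hz => ?_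
  have hfst : Tendsto Prod.fst (nhds ((0 : ℝ), z)) (nhds 0) := continuous_fst.tendsto _
  have hsnd : Tendsto Prod.snd (nhds ((0 : ℝ), z)) (nhds z) := continuous_snd.tendsto _
  have hy : Tendsto (fun p : ℝ × ℝ × ℝ => p.2.2) (nhds ((0 : ℝ), z)) (nhds z.2) :=
    (continuous_snd.tendsto _).comp hsnd
  have hmul : Tendsto (fun p : ℝ × ℝ × ℝ => p.1 * u p.2) (nhds ((0 : ℝ), z)) (nhds (0 * u z)) :=
    hfst.mul ((hu z hz).tendsto.comp hsnd)
  filter_upwards [hfst.eventually_lt hy (hKw z hz).1,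
    hy.eventually_lt (hfst.const_sub w) (by simpa using (hKw z hz).2),
    hmul.eventually_lt_const (by simp : 0 * u z < 1)] with p h₁ h₂ h₃
  exact ⟨⟨h₁.le, h₂.le⟩, h₃.le⟩

lemma setIntegral_exp_mul_slopeExcess_nonpos (hα : 0 < sin α) (hw : 0 < w) (hL : 0 < L)
    (h₁ : IsSubtranslatorOn (Pgram α w L) u₁) (hbot : TendsBotOnHorizontalSides α w L u₁)
    (h₂ : IsSupertranslatorOn (Pgram α w L) u₂) (htop : TendsTopOnSlantedSides α w L u₂)
    {K : Set (ℝ × ℝ)} (hK : IsCompact K) (hKΩ : K ⊆ Pgram α w L) :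
    ∫ z in K, exp (u₁ z) * slopeExcess (grad u₁ z) (grad u₂ z) ≤ 0 := by
  obtain ⟨g, hg, hle⟩ := exists_integrableOn_exp_shear_le hα hw hL h₁ hbot
  obtain ⟨C, hC⟩ := exists_deriv_smoothTransition_le
  set F := sliceIntegral (Pgram α w L) fun z => exp (u₁ z)
  set I := ∫ z in Pgram α w L, exp (u₁ z)
  have hcont := h₁.1.continuousOn
  have hstrip : ∀ᶠ δ in nhdsWithin (0 : ℝ) (Ioi 0), δ ∈ Ioo 0 (w / 2) :=
    Ioo_mem_nhdsGT (half_pos hw)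
  have hlow : Tendsto F (nhdsWithin 0 (Ioi 0)) (nhds 0) := by
    rw [← nhdsWithin_Ioo_eq_nhdsGT hw]
    exact tendsto_sliceIntegral_exp hcont hbot hg hle (by simp)
  have hhigh : Tendsto (fun δ => F (w - δ)) (nhdsWithin 0 (Ioi 0)) (nhds 0) := by
    refine (tendsto_sliceIntegral_exp hcont hbot hg hle (by simp)).comp
      (tendsto_nhdsWithin_iff.2 ⟨?_, hstrip.mono fun δ hδ => ⟨?_, ?_⟩⟩ :
        Tendsto (fun δ => w - δ) (nhdsWithin 0 (Ioi 0)) (nhdsWithin w (Ioo 0 w)))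
    · exact ((continuous_const.sub continuous_id).tendsto' 0 w (sub_zero w)).mono_left
        nhdsWithin_le_nhds
    · linarith [hδ.2]
    · linarith [hδ.1]
  have hlim : Tendsto (fun δ => 2 * (F δ + F (w - δ)) + δ * C * I) (nhdsWithin 0 (Ioi 0))
      (nhds (2 * (0 + 0) + 0 * C * I)) :=
    ((hlow.add hhigh).const_mul 2).add
      (((tendsto_id.mono_left nhdsWithin_le_nhds).mul_const C).mul_const I)
  rw [add_zero, mul_zero, zero_mul, zero_mul, add_zero] at hlim
  refine ge_of_tendsto hlim ?_
  have hKu := eventually_forall_mem_strip hK (fun z hz => ⟨(hKΩ hz).1, (hKΩ hz).2.1⟩) fun z hz =>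
    (h₂.1.contDiffAt (isOpen_pgram.mem_nhds (hKΩ hz))).continuousAt
  filter_upwards [hstrip, nhdsWithin_le_nhds hKu] with δ hδ hδK
  have hδw : Icc δ (w - δ) ⊆ Ioo 0 w := fun y hy => ⟨hδ.1.trans_le hy.1, by linarith [hy.2, hδ.1]⟩
  have hδδ : δ ≤ w - δ := by linarith [hδ.2]
  exact setIntegral_slopeExcess_le isOpen_pgram isBounded_pgram h₁ h₂ hδδ
    (fun z hz hy => htop.tendsto_of_mem_frontier hw hL hz (hδw hy))
    (integrableOn_exp_pgram hcont hg hle)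
    (integrable_slice_exp hcont hg hle (hδw (left_mem_Icc.2 hδδ)))
    (integrable_slice_exp hcont hg hle (hδw (right_mem_Icc.2 hδδ)))
    hδ.1 hC hK.measurableSet hKΩ (fun z hz => (hδK z hz).1) fun z hz => (hδK z hz).2

lemma eqOn_zero_of_setIntegral_nonpos {X : Type*} [TopologicalSpace X] [T2Space X]
    [LocallyCompactSpace X] [MeasurableSpace X] [BorelSpace X] {μ : Measure X}
    [IsFiniteMeasureOnCompacts μ] [μ.IsOpenPosMeasure] {Ω : Set X} {f : X → ℝ} (hΩ : IsOpen Ω)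
    (hf : ContinuousOn f Ω) (hf0 : ∀ z ∈ Ω, 0 ≤ f z)
    (hint : ∀ K ⊆ Ω, IsCompact K → ∫ z in K, f z ∂μ ≤ 0) : EqOn f 0 Ω := by
  intro z hz
  obtain ⟨K, hK, hzK, hKΩ⟩ := exists_compact_subset hΩ hz
  have hfK := hf.mono hKΩ
  have hnonneg : 0 ≤ᵐ[μ.restrict K] f := by
    filter_upwards [ae_restrict_mem hK.measurableSet] with x hx using hf0 x (hKΩ hx)
  have hae : f =ᵐ[μ.restrict K] 0 :=
    (setIntegral_eq_zero_iff_of_nonneg_ae hnonneg (hfK.integrableOn_compact hK)).1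
      ((hint K hKΩ hK).antisymm (integral_nonneg_of_ae hnonneg))
  exact Measure.eqOn_open_of_ae_eq (ae_restrict_of_ae_restrict_of_subset interior_subset hae)
    isOpen_interior (hfK.mono interior_subset) continuousOn_const hzK

lemma continuousOn_slopeExcess_grad {Ω : Set (ℝ × ℝ)} (hΩ : IsOpen Ω) (h₁ : ContDiffOn ℝ 2 u₁ Ω)
    (h₂ : ContDiffOn ℝ 2 u₂ Ω) : ContinuousOn (fun z => slopeExcess (grad u₁ z) (grad u₂ z)) Ω := by
  have hgrad {u : ℝ × ℝ → ℝ} (hu : ContDiffOn ℝ 2 u Ω) : ContinuousOn (grad u) Ω := fun q hq =>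
    (contDiffAt_grad (hu.contDiffAt (hΩ.mem_nhds hq))).continuousAt.continuousWithinAt
  exact continuousOn_slopeExcess (hgrad h₁) (hgrad h₂)

theorem exists_eqOn_add_const (hα : 0 < sin α) (hw : 0 < w) (hL : 0 < L)
    (h₁ : IsSubtranslatorOn (Pgram α w L) u₁) (hbot : TendsBotOnHorizontalSides α w L u₁)
    (h₂ : IsSupertranslatorOn (Pgram α w L) u₂) (htop : TendsTopOnSlantedSides α w L u₂) :
    ∃ c, EqOn u₁ (u₂ · + c) (Pgram α w L) := by
  have hcont : ContinuousOn (fun z => exp (u₁ z) * slopeExcess (grad u₁ z) (grad u₂ z))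
      (Pgram α w L) :=
    h₁.1.continuousOn.rexp.mul (continuousOn_slopeExcess_grad isOpen_pgram h₁.1 h₂.1)
  have hzero := eqOn_zero_of_setIntegral_nonpos isOpen_pgram hcont
    (fun z _ => mul_nonneg (exp_pos _).le (slopeExcess_nonneg _ _))
    fun K hKΩ hK => setIntegral_exp_mul_slopeExcess_nonpos hα hw hL h₁ hbot h₂ htop hK hKΩ
  refine isOpen_pgram.exists_eq_add_of_fderiv_eq isPreconnected_pgram
    (h₁.1.differentiableOn two_ne_zero) (h₂.1.differentiableOn two_ne_zero)
    fun z hz => fderiv_eq_of_grad_eq ?_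
  exact slopeExcess_eq_zero_iff.1 ((mul_eq_zero.1 (hzero hz)).resolve_left (exp_pos _).ne')

lemma neBot_nhdsWithin_shear (hw : 0 < w) (hL : 0 < L) {z : ℝ × ℝ}
    (hz : z ∈ Icc 0 L ×ˢ Icc 0 w) : (nhdsWithin (shear α z) (Pgram α w L)).NeBot := by
  rw [← mem_closure_iff_nhdsWithin_neBot, pgram_eq_image_shear, closure_image_shear hL hw]
  exact mem_image_of_mem _ hz

lemma width_le_of_eqOn_add_const {c : ℝ} (hw : 0 < w) (hL : 0 < L)
    (hbot : TendsBotOnHorizontalSides α w L u₁) (hu₂ : ContinuousOn u₂ (Pgram α w' L))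
    (heq : EqOn u₁ (u₂ · + c) (Pgram α w L)) : w' ≤ w := by
  by_contra! hlt
  have hmid : L / 2 ∈ Ioo 0 L := ⟨half_pos hL, half_lt_self hL⟩
  have hz : shear α (L / 2, w) ∈ Pgram α w' L := shear_mem_pgram_iff.2 ⟨hmid, hw, hlt⟩
  have := neBot_nhdsWithin_shear (α := α) hw hL (z := (L / 2, w))
    ⟨Ioo_subset_Icc_self hmid, right_mem_Icc.2 hw.le⟩
  refine not_tendsto_nhds_of_tendsto_atBot (hbot _ hmid w (by simp))
    (u₂ (shear α (L / 2, w)) + c) ?_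
  exact (((hu₂ _ hz).mono (pgram_mono hlt.le le_rfl)).tendsto.add_const c).congr'
    (heq.symm.eventuallyEq_of_mem self_mem_nhdsWithin)

lemma length_le_of_eqOn_add_const {L' c : ℝ} (hw : 0 < w) (hL : 0 < L)
    (htop : TendsTopOnSlantedSides α w L u₂) (hu₁ : ContinuousOn u₁ (Pgram α w L'))
    (heq : EqOn u₁ (u₂ · + c) (Pgram α w L)) : L' ≤ L := by
  by_contra! hlt
  have hmid : w / 2 ∈ Ioo 0 w := ⟨half_pos hw, half_lt_self hw⟩
  have hz : shear α (L, w / 2) ∈ Pgram α w L' := shear_mem_pgram_iff.2 ⟨⟨hL, hlt⟩, hmid⟩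
  have := neBot_nhdsWithin_shear (α := α) hw hL (z := (L, w / 2))
    ⟨right_mem_Icc.2 hL.le, Ioo_subset_Icc_self hmid⟩
  refine not_tendsto_nhds_of_tendsto_atTop
    (tendsto_atTop_add_const_right _ c (htop L (by simp) _ hmid)) (u₁ (shear α (L, w / 2))) ?_
  exact ((hu₁ _ hz).mono (pgram_mono le_rfl hlt.le)).tendsto.congr'
    (heq.eventuallyEq_of_mem self_mem_nhdsWithin)

theorem scherk_translator_monotone_general {w₁ w₂ L₁ L₂ : ℝ} (hα : α ∈ Ioo 0 π)
    (hw₁ : 0 < w₁) (hL₂ : 0 < L₂)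
    (h₁ : IsSubtranslatorOn (Pgram α w₁ L₁) u₁) (hbot : TendsBotOnHorizontalSides α w₁ L₁ u₁)
    (h₂ : IsSupertranslatorOn (Pgram α w₂ L₂) u₂) (htop : TendsTopOnSlantedSides α w₂ L₂ u₂)
    (hw : w₁ ≤ w₂) (hL : L₂ ≤ L₁) :
    w₁ = w₂ ∧ L₁ = L₂ ∧ ∃ c : ℝ, ∀ p ∈ Pgram α w₁ L₁, u₁ p - u₂ p = c := by
  have hbot' := hbot.mono hL
  have htop' := htop.mono hw
  obtain ⟨c, hc⟩ := exists_eqOn_add_const (sin_pos_of_mem_Ioo hα) hw₁ hL₂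
    (h₁.mono (pgram_mono le_rfl hL)) hbot' (h₂.mono (pgram_mono hw le_rfl)) htop'
  obtain rfl := hw.antisymm (width_le_of_eqOn_add_const hw₁ hL₂ hbot' h₂.1.continuousOn hc)
  obtain rfl := hL.antisymm' (length_le_of_eqOn_add_const hw₁ hL₂ htop' h₁.1.continuousOn hc)
  exact ⟨rfl, rfl, c, fun p hp => sub_eq_of_eq_add' (hc hp)⟩

end Rigidity

section Scherk

variable {α w L : ℝ} {u : ℝ × ℝ → ℝ} {Ω : Set (ℝ × ℝ)}

lemma IsTranslatorOn.contDiffOn_two (h : IsTranslatorOn Ω u) : ContDiffOn ℝ 2 u Ω :=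
  h.1.of_le (WithTop.coe_le_coe.2 (le_top : (2 : ℕ∞) ≤ ⊤))

lemma IsTranslatorOn.translatorOp_eq_zero (h : IsTranslatorOn Ω u) {q : ℝ × ℝ} (hq : q ∈ Ω) :
    translatorOp u q = 0 :=
  sub_eq_zero.2 (h.2 q hq)

lemma IsTranslatorOn.isSubtranslatorOn (h : IsTranslatorOn Ω u) : IsSubtranslatorOn Ω u :=
  ⟨h.contDiffOn_two, fun _ hq => (h.translatorOp_eq_zero hq).ge⟩

lemma IsTranslatorOn.isSupertranslatorOn (h : IsTranslatorOn Ω u) : IsSupertranslatorOn Ω u :=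
  ⟨h.contDiffOn_two, fun _ hq => (h.translatorOp_eq_zero hq).le⟩

lemma ScherkBVP.tendsBotOnHorizontalSides (h : ScherkBVP α w L u) :
    TendsBotOnHorizontalSides α w L u := by
  rintro ξ ⟨hξ, hξL⟩ y (rfl | rfl)
  · simpa [shear_apply] using h.2.1 ξ hξ hξL
  · exact h.2.2.1 _ (lt_add_of_pos_left _ hξ) (add_lt_add_left hξL _)

lemma ScherkBVP.tendsTopOnSlantedSides (h : ScherkBVP α w L u) :
    TendsTopOnSlantedSides α w L u := by
  rintro ξ (rfl | rfl) y ⟨hy, hyw⟩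
  · simpa only [shear_apply, zero_add] using h.2.2.2.1 y hy hyw
  · exact h.2.2.2.2 y hy hyw

end Scherk

/-- monotonicity/uniqueness: if `w₁ ≤ w₂` and `L₁ ≥ L₂` then the parameters
agree and the two Scherk translators differ by a constant. -/
theorem scherk_translator_monotone (α : ℝ) (hα : α ∈ Set.Ioo 0 π)
    (w₁ w₂ L₁ L₂ : ℝ) (hw₁ : 0 < w₁) (hw₂ : 0 < w₂) (hL₁ : 0 < L₁) (hL₂ : 0 < L₂)
    (u₁ u₂ : ℝ × ℝ → ℝ) (h₁ : ScherkBVP α w₁ L₁ u₁) (h₂ : ScherkBVP α w₂ L₂ u₂)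
    (hw : w₁ ≤ w₂) (hL : L₂ ≤ L₁) :
    w₁ = w₂ ∧ L₁ = L₂ ∧ ∃ c : ℝ, ∀ p ∈ Pgram α w₁ L₁, u₁ p - u₂ p = c :=
  scherk_translator_monotone_general hα hw₁ hL₂ h₁.1.isSubtranslatorOn
    h₁.tendsBotOnHorizontalSides h₂.1.isSupertranslatorOn h₂.tendsTopOnSlantedSides hw hL
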